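/- arXiv:2210.08840 — 3 statements merged into one kernel-verified Lean document; each statement's English description precedes it below -/
import Mathlib

section
/- Every nonzero ideal of O_K = ℤ[i] that is coprime to 2 has a unique generator congruent to 1 modulo (1+i)³. -/
open Complex Real Filter Topology
open scoped BigOperators Classical

noncomputable section

/-- The norm `N(n)` of a Gaussian integer, as a real number. -/
def Nm (n : GaussianInt) : ℝ := ((Zsqrtd.norm n : ℤ) : ℝ)

/-- The element `1 + i` of `ℤ[i]`. -/
def ωg : GaussianInt := ⟨1, 1⟩

/-- The element `i` of `ℤ[i]`. -/
def ig : GaussianInt := ⟨0, 1⟩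

/-- `n` is primary: `n ≡ 1 mod (1+i)³`. -/
def IsPrimary (n : GaussianInt) : Prop := ωg ^ 3 ∣ (n - 1)

/-- `ẽ(z) = exp(2πi(z/(2i) − z̄/(2i)))`. -/
def eT (z : ℂ) : ℂ :=
  Complex.exp (2 * (Real.pi : ℂ) * Complex.I *
    (z / (2 * Complex.I) - (starRingEnd ℂ) z / (2 * Complex.I)))

/-- `χ a n = (a/n)` is the quadratic residue symbol of `ℤ[i]`: on odd primes `ϖ` it is
the `±1` (or `0`) value determined by `(a/ϖ) ≡ a^((N(ϖ)-1)/2) mod ϖ`, it is extended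
multiplicatively in the denominator over odd elements, and equals `1` on units. -/
structure IsQuadSym (χ : GaussianInt → GaussianInt → ℤ) : Prop where
  val_prime : ∀ ϖ a : GaussianInt, Prime ϖ → ¬ ωg ∣ ϖ → ¬ ϖ ∣ a →
    (χ a ϖ = 1 ∨ χ a ϖ = -1) ∧
      ϖ ∣ (a ^ (((Zsqrtd.norm ϖ).toNat - 1) / 2) - (χ a ϖ : GaussianInt))
  zero_of_dvd : ∀ ϖ a : GaussianInt, Prime ϖ → ϖ ∣ a → χ a ϖ = 0
  mul_den : ∀ a m n : GaussianInt, ¬ ωg ∣ m → ¬ ωg ∣ n → χ a (m * n) = χ a m * χ a n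
  unit_den : ∀ a u : GaussianInt, IsUnit u → χ a u = 1

/-- `L s m = L(s, χ_m)`: the Hecke `L`-function attached to the quadratic symbol `(m/·)`,
given by its Dirichlet series over primary elements (= odd ideals) for `Re s > 1`,
and analytic away from `s = 1`. -/
def IsHeckeL (χ : GaussianInt → GaussianInt → ℤ) (L : ℂ → GaussianInt → ℂ) : Prop :=
  (∀ (m : GaussianInt) (s : ℂ), 1 < s.re →
      L s m = ∑' n : {n : GaussianInt // IsPrimary n}, (χ m n.1 : ℂ) / (Nm n.1 : ℂ) ^ s) ∧
    ∀ m : GaussianInt, DifferentiableOn ℂ (fun s => L s m) {s : ℂ | s ≠ 1}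

/-- The generalized Riemann hypothesis for the family of quadratic Hecke `L`-functions. -/
def GRHfor (L : ℂ → GaussianInt → ℂ) : Prop :=
  ∀ m : GaussianInt, m ≠ 0 → ∀ s : ℂ, 0 < s.re → s.re < 1 → L s m = 0 → s.re = 1 / 2

/-- The absolute norm of an ideal of `ℤ[i]`, as a complex number. -/
def idN (I : Ideal GaussianInt) : ℂ := (Nat.card (GaussianInt ⧸ I) : ℂ)

/-- The Dedekind zeta function of `ℚ(i)`. -/
def IsDedekindZetaK (Z : ℂ → ℂ) : Prop :=
  (∀ s : ℂ, 1 < s.re → Z s = ∑' I : {I : Ideal GaussianInt // I ≠ ⊥}, idN I.1 ^ (-s)) ∧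
    DifferentiableOn ℂ Z {s : ℂ | s ≠ 1}

/-- `ζ_K^{(2)}`: the Euler product of `ζ_K` with the factor at the prime `(1+i)` omitted. -/
def zeta2 (Z : ℂ → ℂ) (s : ℂ) : ℂ := Z s * (1 - (2 : ℂ) ^ (-s))

/-- `P(z) = ∏_ϖ (1 + ((N(ϖ)^{z-1/2} − 1)(N(ϖ) + 1))⁻¹)`, over all primes of `ℤ[i]`. -/
def Pfun (z : ℂ) : ℂ :=
  ∏' I : {I : Ideal GaussianInt // I ≠ ⊥ ∧ I.IsPrime},
    (1 + 1 / ((idN I.1 ^ (z - 1 / 2) - 1) * (idN I.1 + 1)))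

/-- The Euler product over odd primes appearing in the ratios-conjecture main term. -/
def ratioEuler (α β : ℂ) : ℂ :=
  ∏' I : {I : Ideal GaussianInt // I ≠ ⊥ ∧ I.IsPrime ∧ (2 : GaussianInt) ∉ I},
    (1 + (idN I.1 ^ (α - β) - 1) / (idN I.1 ^ (1 + α - β) * (idN I.1 ^ (1 + α + β) - 1)))

/-- `g r n` is the quadratic Gauss sum `g(r,n) = ∑_{x mod n} (x/n) ẽ(rx/n)`:
for any complete residue system `S` modulo `n` it is given by the indicated finite sum. -/
def IsGaussSum (χ : GaussianInt → GaussianInt → ℤ) (g : GaussianInt → GaussianInt → ℂ) : Prop :=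
  ∀ r n : GaussianInt, n ≠ 0 → ∀ S : Finset GaussianInt,
    (∀ z : GaussianInt, ∃! x, x ∈ S ∧ n ∣ (z - x)) →
    g r n = ∑ x ∈ S, (χ x n : ℂ) * eT (GaussianInt.toComplex (r * x) / GaussianInt.toComplex n)

/-- A Dirichlet character modulo `q` on `ℤ[i]` (extended by zero). -/
def IsDirichletChar (q : GaussianInt) (χ : GaussianInt → ℂ) : Prop :=
  χ 1 = 1 ∧ (∀ a b : GaussianInt, χ (a * b) = χ a * χ b) ∧
    (∀ a b : GaussianInt, q ∣ (a - b) → χ a = χ b) ∧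
    (∀ a : GaussianInt, IsCoprime a q → ‖χ a‖ = 1) ∧
    (∀ a : GaussianInt, ¬ IsCoprime a q → χ a = 0)

/-- The Gauss sum `g(r,χ) = ∑_{x mod q} χ(x) ẽ(rx/q)` of a Dirichlet character modulo `q`. -/
def IsGaussSumChar (q : GaussianInt) (χ : GaussianInt → ℂ) (g : GaussianInt → ℂ) : Prop :=
  ∀ r : GaussianInt, ∀ S : Finset GaussianInt,
    (∀ z : GaussianInt, ∃! x, x ∈ S ∧ q ∣ (z - x)) →
    g r = ∑ x ∈ S, χ x * eT (GaussianInt.toComplex (r * x) / GaussianInt.toComplex q)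

/-- A primary `n = a + bi` is of type 1 if `a ≡ 1, b ≡ 0 (mod 4)` (else it is of type 2). -/
def IsTypeOne (n : GaussianInt) : Prop := n.re % 4 = 1 ∧ n.im % 4 = 0

/-- `ψ₁`, the principal character modulo `2` on `ℤ[i]`. -/
def psi1 (m : GaussianInt) : ℂ := if IsCoprime m 2 then 1 else 0

/-- `ψ₂`, the primitive quadratic character modulo `2` on `ℤ[i]`:
`ψ₂(m) = 1` for `m ≡ 1 (mod 2)`, `ψ₂(m) = −1` for `m ≡ i (mod 2)`, and `0` otherwise. -/
def psi2 (m : GaussianInt) : ℂ :=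
  if (2 : GaussianInt) ∣ (m - 1) then 1 else if (2 : GaussianInt) ∣ (m - ig) then -1 else 0

/-- `χ̃_n = ψ_j · (·/n)`, where `j` is the type of the primary element `n`. -/
def tchi (χ : GaussianInt → GaussianInt → ℤ) (n m : GaussianInt) : ℂ :=
  (if IsTypeOne n then psi1 m else psi2 m) * (χ m n : ℂ)

theorem isPrimary_iff_mod (n : GaussianInt) :
    IsPrimary n ↔ n.im % 2 = 0 ∧ (n.re + n.im) % 4 = 1 := by
  have hw : ωg ^ 3 = ⟨-2, 2⟩ := by
    rw [pow_succ, pow_two]; ext <;> simp [ωg]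
  unfold IsPrimary
  rw [hw]
  constructor
  · rintro ⟨c, hc⟩
    have h1 := congrArg Zsqrtd.re hc
    have h2 := congrArg Zsqrtd.im hc
    simp at h1 h2
    omega
  · rintro ⟨h1, h2⟩
    refine ⟨⟨(n.im - (n.re - 1)) / 4, -((n.re - 1) + n.im) / 4⟩, ?_⟩
    ext
    · simp; omega
    · simp; omega

theorem gaussian_unit_cases (u : GaussianInt) (hu : IsUnit u) :
    u = ⟨1, 0⟩ ∨ u = ⟨-1, 0⟩ ∨ u = ⟨0, 1⟩ ∨ u = ⟨0, -1⟩ := by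
  have h := (Zsqrtd.norm_eq_one_iff' (by norm_num) u).2 hu
  obtain ⟨a, b⟩ := u
  simp [Zsqrtd.norm_def] at h
  have ha : a ≤ 1 := by nlinarith [mul_self_nonneg b]
  have ha' : -1 ≤ a := by nlinarith [mul_self_nonneg b]
  have hb : b ≤ 1 := by nlinarith [mul_self_nonneg a]
  have hb' : -1 ≤ b := by nlinarith [mul_self_nonneg a]
  simp only [Zsqrtd.ext_iff]
  interval_cases a <;> interval_cases b <;> simp_all

theorem exists_unit_primary (g : GaussianInt) (h : (g.re + g.im) % 2 = 1) :
    ∃ u : GaussianInt, IsUnit u ∧ IsPrimary (g * u) := by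
  have key : ∀ u : GaussianInt, u.norm = 1 → IsUnit u := fun u hu =>
    (Zsqrtd.norm_eq_one_iff' (by norm_num) u).1 hu
  have h4 : (g.im % 2 = 0 ∧ (g.re + g.im) % 4 = 1) ∨ (g.im % 2 = 0 ∧ (g.re + g.im) % 4 = 3) ∨
      (g.re % 2 = 0 ∧ (g.re - g.im) % 4 = 1) ∨ (g.re % 2 = 0 ∧ (g.re - g.im) % 4 = 3) := by
    omega
  rcases h4 with h4 | h4 | h4 | h4
  · refine ⟨⟨1, 0⟩, key _ (by simp [Zsqrtd.norm_def]), (isPrimary_iff_mod _).2 ?_⟩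
    simp; omega
  · refine ⟨⟨-1, 0⟩, key _ (by simp [Zsqrtd.norm_def]), (isPrimary_iff_mod _).2 ?_⟩
    simp; omega
  · refine ⟨⟨0, 1⟩, key _ (by simp [Zsqrtd.norm_def]), (isPrimary_iff_mod _).2 ?_⟩
    simp; omega
  · refine ⟨⟨0, -1⟩, key _ (by simp [Zsqrtd.norm_def]), (isPrimary_iff_mod _).2 ?_⟩
    simp; omega

theorem odd_of_coprime_two (g : GaussianInt)
    (h : IsCoprime (Ideal.span {g}) (Ideal.span {(2 : GaussianInt)})) :
    (g.re + g.im) % 2 = 1 := by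
  rw [Ideal.isCoprime_span_singleton_iff] at h
  obtain ⟨x, y, hxy⟩ := h
  have h1 := congrArg Zsqrtd.re hxy
  have h2 := congrArg Zsqrtd.im hxy
  simp at h1 h2
  by_contra hc
  obtain ⟨k, hk⟩ : ∃ k, g.re = 2 * k - g.im := ⟨(g.re + g.im) / 2, by omega⟩
  rw [hk] at h1 h2
  have h3 : 2 * (x.re * k + x.im * k - x.im * g.im + y.re + y.im) = 1 := by
    linear_combination h1 + h2
  omega

/-- every nonzero ideal of `ℤ[i]` coprime to `2` has a unique generator
congruent to `1` modulo `(1+i)³` (the primary generator). -/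
theorem exists_unique_primary_generator :
    ∀ I : Ideal GaussianInt, I ≠ ⊥ → IsCoprime I (Ideal.span {(2 : GaussianInt)}) →
      ∃! n : GaussianInt, IsPrimary n ∧ I = Ideal.span {n} := by
  intro I _ hco
  obtain ⟨g, hg⟩ := (IsPrincipalIdealRing.principal I).principal
  change I = Ideal.span {g} at hg
  subst hg
  obtain ⟨u, hu, hp⟩ := exists_unit_primary g (odd_of_coprime_two g hco)
  refine ⟨g * u, ⟨hp, (Ideal.span_singleton_mul_right_unit hu g).symm⟩, ?_⟩
  rintro m ⟨hm, hme⟩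
  rw [← Ideal.span_singleton_mul_right_unit hu g] at hme
  obtain ⟨v, hv⟩ := Ideal.span_singleton_eq_span_singleton.1 hme
  rw [isPrimary_iff_mod] at hp hm
  rw [← hv] at hm ⊢
  generalize g * u = n at *
  rcases gaussian_unit_cases v v.isUnit with h | h | h | h <;> rw [h] at hm ⊢ <;>
    simp at hm
  · ext <;> simp
  all_goals omega
end
end

section
/- Let n, m be primary elements of O_K and let r, s, k ∈ O_K. Then: (i) if (s,n) = 1, then g(rs, n) = conj((s/n)) · g(r, n); (ii) if (m, n) = 1, then g(k, mn) = g(k, m) · g(k, n). -/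
open Complex Real Filter Topology
open scoped BigOperators Classical

noncomputable section

/-- Odd real part, even imaginary part. -/
def Od (z : GaussianInt) : Prop := z.re % 2 = 1 ∧ z.im % 2 = 0

lemma omega_dvd_iff (z : GaussianInt) : ωg ∣ z ↔ (z.re + z.im) % 2 = 0 := by
  constructor
  · rintro ⟨w, rfl⟩
    simp only [ωg, Zsqrtd.re_mul, Zsqrtd.im_mul]
    omega
  · intro h
    refine ⟨⟨(z.re + z.im) / 2, (z.im - z.re) / 2⟩, ?_⟩
    apply Zsqrtd.ext
    · simp only [ωg, Zsqrtd.re_mul]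
      omega
    · simp only [ωg, Zsqrtd.im_mul]
      omega

lemma od_not_omega {z : GaussianInt} (h : Od z) : ¬ ωg ∣ z := by
  rw [omega_dvd_iff]
  obtain ⟨h1, h2⟩ := h
  omega

lemma od_ne_zero {z : GaussianInt} (h : Od z) : z ≠ 0 := by
  rintro rfl
  simp [Od] at h

lemma od_of_primary {z : GaussianInt} (h : IsPrimary z) : Od z := by
  obtain ⟨w, hw⟩ := h
  have : z = 1 + ωg ^ 3 * w := by rw [← hw]; ring
  have h3 : ωg ^ 3 = ⟨-2, 2⟩ := by decide
  rw [h3] at this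
  subst this
  constructor
  · simp only [Zsqrtd.re_add, Zsqrtd.re_mul, Zsqrtd.re_one]
    omega
  · simp only [Zsqrtd.im_add, Zsqrtd.im_mul, Zsqrtd.im_one]
    omega

lemma emod_two_mul (a b : ℤ) : (a * b) % 2 = (a % 2) * (b % 2) % 2 := Int.mul_emod a b 2

lemma od_mul {z w : GaussianInt} (hz : Od z) (hw : Od w) : Od (z * w) := by
  obtain ⟨a, b⟩ := hz
  obtain ⟨c, d⟩ := hw
  have h1 := emod_two_mul z.re w.re
  have h2 := emod_two_mul z.im w.im
  have h3 := emod_two_mul z.re w.im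
  have h4 := emod_two_mul z.im w.re
  rw [a, c] at h1; rw [b, d] at h2; rw [a, d] at h3; rw [b, c] at h4
  constructor
  · simp only [Zsqrtd.re_mul]
    rw [mul_assoc]
    omega
  · simp only [Zsqrtd.im_mul]
    omega

lemma od_of_mul {z w : GaussianInt} (hz : Od z) (hw : Od (z * w)) : Od w := by
  obtain ⟨a, b⟩ := hz
  obtain ⟨c, d⟩ := hw
  simp only [Zsqrtd.re_mul, Zsqrtd.im_mul] at c d
  rw [mul_assoc] at c
  have h1 := emod_two_mul z.re w.re
  have h2 := emod_two_mul z.im w.im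
  have h3 := emod_two_mul z.re w.im
  have h4 := emod_two_mul z.im w.re
  rw [a] at h1 h3; rw [b] at h2 h4
  constructor <;> omega

lemma od_neg {z : GaussianInt} (hz : Od z) : Od (-z) := by
  obtain ⟨a, b⟩ := hz
  constructor <;> simp <;> omega

lemma od_unit {u : GaussianInt} (hu : IsUnit u) (h : Od u) : u = 1 ∨ u = -1 := by
  have h1 := (Zsqrtd.norm_eq_one_iff' (by norm_num) u).2 hu
  rw [Zsqrtd.norm_def] at h1
  obtain ⟨a, b⟩ := h
  have h2 : u.re ^ 2 ≤ 1 := by nlinarith [sq_nonneg u.im]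
  have h3 : u.im ^ 2 ≤ 1 := by nlinarith [sq_nonneg u.re]
  have h4 : u.re ≤ 1 := by nlinarith
  have h5 : -1 ≤ u.re := by nlinarith
  have h6 : u.im ≤ 1 := by nlinarith
  have h7 : -1 ≤ u.im := by nlinarith
  have h8 : u.im = 0 := by omega
  have h9 : u.re = 1 ∨ u.re = -1 := by omega
  rcases h9 with h9 | h9
  · left; apply Zsqrtd.ext <;> simp [h8, h9]
  · right; apply Zsqrtd.ext <;> simp [h8, h9]

lemma ig_unit : IsUnit ig := by
  refine IsUnit.of_mul_eq_one (⟨0, -1⟩ : GaussianInt) (by decide)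

lemma exists_od {z : GaussianInt} (h : ¬ ωg ∣ z) : ∃ v : GaussianInt, IsUnit v ∧ Od (v * z) := by
  rw [omega_dvd_iff] at h
  by_cases h0 : z.im % 2 = 0
  · exact ⟨1, isUnit_one, by rw [one_mul]; exact ⟨by omega, h0⟩⟩
  · refine ⟨ig, ig_unit, ?_, ?_⟩
    · simp only [ig, Zsqrtd.re_mul]
      omega
    · simp only [ig, Zsqrtd.im_mul]
      omega

/-- Induction principle. -/
lemma od_induction {P : GaussianInt → Prop} (h1 : P 1) (hneg : P (-1))
    (hp : ∀ p a, Prime p → Od p → Od a → P a → P (p * a)) {n : GaussianInt} (hn : Od n) : P n := by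
  have key : ∀ n : GaussianInt, n ≠ 0 → ∀ u, IsUnit u → Od (u * n) → P (u * n) := by
    intro n hn0
    induction n using UniqueFactorizationMonoid.induction_on_prime with
    | h₁ => exact absurd rfl hn0
    | h₂ x hx =>
      intro u hu ho
      rcases od_unit (hu.mul hx) ho with h | h <;> rw [h] <;> assumption
    | h₃ a p ha hpp ih =>
      intro u hu ho
      have hop : ¬ ωg ∣ p := fun h => od_not_omega ho ((h.mul_right a).mul_left u)
      obtain ⟨v, hv, hvp⟩ := exists_od hop
      obtain ⟨v', hv'⟩ := hv.exists_right_inv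
      have hv'u : IsUnit v' := IsUnit.of_mul_eq_one v (by rw [mul_comm]; exact hv')
      have e : u * (p * a) = (v * p) * ((u * v') * a) := by
        linear_combination (-(u * p * a)) * hv'
      rw [e] at ho ⊢
      have ho2 := od_of_mul hvp ho
      refine hp _ _ ?_ hvp ho2 (ih ha _ (hu.mul hv'u) ho2)
      exact ((associated_isUnit_mul_left_iff hv).2 (Associated.refl p)).symm.prime hpp
  have := key n (od_ne_zero hn) 1 isUnit_one (by rwa [one_mul])
  rwa [one_mul] at this

lemma od_of_dvd_two {p : GaussianInt} (hp : Prime p) (ho : Od p) : ¬ p ∣ 2 := by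
  intro h
  have h2 : (2 : GaussianInt) = ωg * ⟨1, -1⟩ := by decide
  have h3 : (⟨1, -1⟩ : GaussianInt) = ωg * ⟨0, -1⟩ := by decide
  have hu : IsUnit (⟨0, -1⟩ : GaussianInt) := IsUnit.of_mul_eq_one ig (by decide)
  have hw : p ∣ ωg := by
    rw [h2] at h
    rcases hp.dvd_or_dvd h with h | h
    · exact h
    · rw [h3] at h
      rcases hp.dvd_or_dvd h with h | h
      · exact h
      · exact absurd (isUnit_of_dvd_unit h hu) hp.not_isUnit
  obtain ⟨c, hc⟩ := hw
  have hn := congrArg Zsqrtd.norm hc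
  rw [Zsqrtd.norm_mul] at hn
  have hw2 : Zsqrtd.norm ωg = 2 := by decide
  rw [hw2] at hn
  have hpo : (Zsqrtd.norm p) % 2 = 1 := by
    rw [Zsqrtd.norm_def]
    obtain ⟨a, b⟩ := ho
    have h1 := emod_two_mul p.re p.re
    have h2 := emod_two_mul p.im p.im
    rw [a] at h1; rw [b] at h2
    rw [mul_assoc]
    omega
  have hpn : Zsqrtd.norm p ≠ 1 := fun h =>
    hp.not_isUnit ((Zsqrtd.norm_eq_one_iff' (by norm_num) p).1 h)
  have hnn : 0 ≤ Zsqrtd.norm p := Zsqrtd.norm_nonneg (by norm_num) p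
  have hle : Zsqrtd.norm p ≤ 2 := Int.le_of_dvd (by norm_num) ⟨_, hn⟩
  omega

lemma pm_unique {p : GaussianInt} (hp : Prime p) (ho : Od p) {x y : ℤ}
    (hx : x = 1 ∨ x = -1) (hy : y = 1 ∨ y = -1) (h : p ∣ ((x : GaussianInt) - (y : GaussianInt))) :
    x = y := by
  have h2 := od_of_dvd_two hp ho
  rcases hx with rfl | rfl <;> rcases hy with rfl | rfl
  · rfl
  · exfalso; apply h2
    have e : ((1 : ℤ) : GaussianInt) - ((-1 : ℤ) : GaussianInt) = 2 := by push_cast; ring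
    rwa [e] at h
  · exfalso; apply h2
    have e : ((-1 : ℤ) : GaussianInt) - ((1 : ℤ) : GaussianInt) = -2 := by push_cast; ring
    rwa [e, dvd_neg] at h
  · rfl

section chi
variable {χ : GaussianInt → GaussianInt → ℤ}

lemma chi_eq (hχ : IsQuadSym χ) {p a : GaussianInt} (hp : Prime p) (ho : Od p) (ha : ¬ p ∣ a) {e : ℤ}
    (he : e = 1 ∨ e = -1)
    (h : p ∣ a ^ (((Zsqrtd.norm p).toNat - 1) / 2) - (e : GaussianInt)) : χ a p = e := by
  obtain ⟨h1, h2⟩ := hχ.val_prime p a hp (od_not_omega ho) ha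
  refine pm_unique hp ho h1 he ?_
  have := dvd_sub h h2
  convert this using 1
  ring

lemma chi_mul_prime (hχ : IsQuadSym χ) {p : GaussianInt} (hp : Prime p) (ho : Od p) (a b : GaussianInt) :
    χ (a * b) p = χ a p * χ b p := by
  by_cases ha : p ∣ a
  · rw [hχ.zero_of_dvd p a hp ha, hχ.zero_of_dvd p _ hp (ha.mul_right b), zero_mul]
  by_cases hb : p ∣ b
  · rw [hχ.zero_of_dvd p b hp hb, hχ.zero_of_dvd p _ hp (hb.mul_left a), mul_zero]
  obtain ⟨h1, h2⟩ := hχ.val_prime p a hp (od_not_omega ho) ha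
  obtain ⟨h3, h4⟩ := hχ.val_prime p b hp (od_not_omega ho) hb
  apply chi_eq hχ hp ho (fun h => (hp.dvd_or_dvd h).elim ha hb)
  · rcases h1 with h1 | h1 <;> rcases h3 with h3 | h3 <;> rw [h1, h3] <;> simp
  · obtain ⟨c, hc⟩ := h2
    obtain ⟨d, hd⟩ := h4
    push_cast
    rw [mul_pow]
    refine ⟨c * b ^ (((Zsqrtd.norm p).toNat - 1) / 2) + (χ a p : GaussianInt) * d, ?_⟩
    linear_combination (b ^ (((Zsqrtd.norm p).toNat - 1) / 2)) * hc + (χ a p : GaussianInt) * hd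

lemma chi_congr_prime (hχ : IsQuadSym χ) {p : GaussianInt} (hp : Prime p) (ho : Od p) {a b : GaussianInt}
    (h : p ∣ a - b) : χ a p = χ b p := by
  by_cases hb : p ∣ b
  · have ha : p ∣ a := by
      have := dvd_add h hb
      rwa [sub_add_cancel] at this
    rw [hχ.zero_of_dvd p a hp ha, hχ.zero_of_dvd p b hp hb]
  have ha : ¬ p ∣ a := by
    intro ha
    apply hb
    have := dvd_sub ha h
    rwa [sub_sub_cancel] at this
  obtain ⟨h3, h4⟩ := hχ.val_prime p b hp (od_not_omega ho) hb
  apply chi_eq hχ hp ho ha h3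
  have := dvd_add (h.trans (sub_dvd_pow_sub_pow a b (((Zsqrtd.norm p).toNat - 1) / 2))) h4
  convert this using 1
  ring

lemma od_one : Od 1 := by constructor <;> rfl

lemma chi_mul (hχ : IsQuadSym χ) {n : GaussianInt} (ho : Od n) (a b : GaussianInt) :
    χ (a * b) n = χ a n * χ b n := by
  refine od_induction (P := fun n => χ (a * b) n = χ a n * χ b n) ?_ ?_ ?_ ho
  · simp [hχ.unit_den]
  · simp [hχ.unit_den]
  · intro p c hp hop hoc ih
    rw [hχ.mul_den _ _ _ (od_not_omega hop) (od_not_omega hoc),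
      hχ.mul_den _ _ _ (od_not_omega hop) (od_not_omega hoc),
      hχ.mul_den _ _ _ (od_not_omega hop) (od_not_omega hoc), ih, chi_mul_prime hχ hp hop]
    ring

lemma chi_congr (hχ : IsQuadSym χ) {n : GaussianInt} (ho : Od n) {a b : GaussianInt}
    (h : n ∣ a - b) : χ a n = χ b n := by
  refine od_induction (P := fun n => n ∣ a - b → χ a n = χ b n) ?_ ?_ ?_ ho h
  · simp [hχ.unit_den]
  · simp [hχ.unit_den]
  · intro p c hp hop hoc ih h
    rw [hχ.mul_den _ _ _ (od_not_omega hop) (od_not_omega hoc),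
      hχ.mul_den _ _ _ (od_not_omega hop) (od_not_omega hoc),
      ih ((dvd_mul_left _ _).trans h), chi_congr_prime hχ hp hop ((dvd_mul_right _ _).trans h)]

lemma not_dvd_of_coprime {p a : GaussianInt} (hp : Prime p) (h : IsCoprime a p) : ¬ p ∣ a :=
  fun hd => hp.not_isUnit (h.isUnit_of_dvd' hd dvd_rfl)

lemma chi_pm (hχ : IsQuadSym χ) {n : GaussianInt} (ho : Od n) {a : GaussianInt}
    (h : IsCoprime a n) : χ a n = 1 ∨ χ a n = -1 := by
  refine od_induction (P := fun n => IsCoprime a n → (χ a n = 1 ∨ χ a n = -1)) ?_ ?_ ?_ ho h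
  · simp [hχ.unit_den]
  · simp [hχ.unit_den]
  · intro p c hp hop hoc ih h
    rw [hχ.mul_den _ _ _ (od_not_omega hop) (od_not_omega hoc)]
    have h1 := ih h.of_mul_right_right
    have h2 := (hχ.val_prime p a hp (od_not_omega hop)
      (not_dvd_of_coprime hp h.of_mul_right_left)).1
    rcases h1 with h1 | h1 <;> rcases h2 with h2 | h2 <;> rw [h1, h2] <;> simp

lemma chi_neg_one (hχ : IsQuadSym χ) {p : GaussianInt} (ho : Od p) :
    χ (-1) p = 1 := by
  have h := chi_mul hχ ho ig ig
  have e : ig * ig = -1 := by decide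
  rw [e] at h
  rw [h]
  have := chi_pm hχ ho (a := ig) ((isCoprime_one_left).of_isCoprime_of_dvd_left ig_unit.dvd)
  rcases this with h | h <;> rw [h] <;> simp

lemma dvd_norm_self (p : GaussianInt) : p ∣ ((Zsqrtd.norm p : ℤ) : GaussianInt) := by
  rw [Zsqrtd.norm_eq_mul_conj]
  exact dvd_mul_right _ _

lemma exists_nat_prime {p : GaussianInt} (hp : Prime p) : ∃ q : ℕ, q.Prime ∧ p ∣ (q : GaussianInt) := by
  have key : ∀ N : ℕ, N ≠ 0 → p ∣ (N : GaussianInt) → ∃ q : ℕ, q.Prime ∧ p ∣ (q : GaussianInt) := by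
    intro N
    induction N using induction_on_primes with
    | zero => intro h; exact absurd rfl h
    | one => intro _ h; exact absurd (isUnit_of_dvd_one (by simpa using h)) hp.not_isUnit
    | prime_mul q a hq ih =>
      intro h0 h
      rw [Nat.cast_mul] at h
      rcases hp.dvd_or_dvd h with h | h
      · exact ⟨q, hq, h⟩
      · exact ih (right_ne_zero_of_mul h0) h
  refine key (Zsqrtd.norm p).natAbs ?_ ?_
  · rw [Int.natAbs_ne_zero]
    intro h
    exact hp.ne_zero ((GaussianInt.norm_eq_zero).1 h)
  · have := dvd_norm_self p
    rwa [← GaussianInt.abs_natCast_norm] at this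

lemma norm_od_mod_four {p : GaussianInt} (ho : Od p) : Zsqrtd.norm p % 4 = 1 := by
  obtain ⟨a, b⟩ := ho
  rw [Zsqrtd.norm_def]
  have h1 : p.re * p.re % 4 = 1 := by
    rcases (by omega : p.re % 4 = 1 ∨ p.re % 4 = 3) with h | h <;> rw [Int.mul_emod, h] <;> rfl
  have h2 : p.im * p.im % 4 = 0 := by
    rcases (by omega : p.im % 4 = 0 ∨ p.im % 4 = 2) with h | h <;> rw [Int.mul_emod, h] <;> rfl
  rw [mul_assoc]
  omega

lemma classify {p : GaussianInt} (hp : Prime p) (ho : Od p) :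
    (∃ q : ℕ, q.Prime ∧ Zsqrtd.norm p = q) ∨
      (∃ q : ℕ, q.Prime ∧ (p = (q : GaussianInt) ∨ p = -(q : GaussianInt))) := by
  obtain ⟨q, hq, c, hc⟩ := exists_nat_prime hp
  have hn := congrArg Zsqrtd.norm hc
  rw [Zsqrtd.norm_mul, Zsqrtd.norm_natCast] at hn
  have hnn : 0 ≤ Zsqrtd.norm p := Zsqrtd.norm_nonneg (by norm_num) p
  obtain ⟨N, hN⟩ := Int.eq_ofNat_of_zero_le hnn
  obtain ⟨M, hM⟩ := Int.eq_ofNat_of_zero_le (Zsqrtd.norm_nonneg (d := -1) (by norm_num) c)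
  have hn' := hn
  rw [hN, hM] at hn
  have hn2 : q * q = N * M := by exact_mod_cast hn
  have hd : N ∣ q ^ 2 := ⟨M, by rw [← hn2, sq]⟩
  obtain ⟨k, hk, hk2⟩ := (Nat.dvd_prime_pow hq).1 hd
  have hq0 : 0 < q := hq.pos
  interval_cases k
  · exfalso
    apply hp.not_isUnit
    rw [← Zsqrtd.norm_eq_one_iff' (by norm_num), hN, hk2]
    simp
  · left
    exact ⟨q, hq, by rw [hN, hk2]; simp⟩
  · right
    refine ⟨q, hq, ?_⟩
    have hM1 : M = 1 := by
      rw [hk2] at hn2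
      have : q * q * M = q * q * 1 := by rw [mul_one]; linarith
      exact Nat.eq_of_mul_eq_mul_left (by positivity) this
    have hcu : IsUnit c := by
      rw [← Zsqrtd.norm_eq_one_iff' (by norm_num), hM, hM1]
      simp
    have hoq : Od (q : GaussianInt) := by
      have h1 := norm_od_mod_four ho
      rw [hN, hk2] at h1
      have h2 : (q * q : ℕ) % 4 = 1 := by
        have : ((q ^ 2 : ℕ) : ℤ) % 4 = 1 := h1
        rw [← sq]; omega
      have h3 : q % 2 = 1 := by
        rcases Nat.mod_two_eq_zero_or_one q with h | h
        · exfalso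
          have : 2 ∣ q * q := (Nat.dvd_of_mod_eq_zero h).mul_right q
          omega
        · exact h
      constructor
      · simp; omega
      · simp
    rw [hc] at hoq
    rcases od_unit hcu (od_of_mul ho hoq) with h | h
    · left; rw [hc, h, mul_one]
    · right; rw [hc, h]; ring

lemma jac_dvd (q : ℕ) (hq : q.Prime) (h2 : q % 2 = 1) (c : ℤ) :
    (q : ℤ) ∣ c ^ ((q - 1) / 2) - jacobiSym c q := by
  have : Fact q.Prime := ⟨hq⟩
  rw [← jacobiSym.legendreSym.to_jacobiSym]
  have h := legendreSym.eq_pow q c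
  rw [← ZMod.intCast_zmod_eq_zero_iff_dvd]
  push_cast
  rw [h, show (q - 1) / 2 = q / 2 by omega, sub_self]

lemma cast_dvd_of {p : GaussianInt} {q a : ℤ} (hp : p ∣ (q : GaussianInt)) (h : q ∣ a) :
    p ∣ (a : GaussianInt) :=
  hp.trans ((Zsqrtd.intCast_dvd_intCast q a).2 h)

/-- Split case, rational numerator. -/
lemma chi_split (hχ : IsQuadSym χ) {p : GaussianInt} (hp : Prime p) (ho : Od p) {q : ℕ} (hq : q.Prime)
    (hN : Zsqrtd.norm p = q) (c : ℤ) : χ (c : GaussianInt) p = jacobiSym c q := by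
  have hpq : p ∣ ((q : ℤ) : GaussianInt) := by rw [← hN]; exact dvd_norm_self p
  have h4 := norm_od_mod_four ho
  rw [hN] at h4
  have : Fact q.Prime := ⟨hq⟩
  by_cases hc : p ∣ (c : GaussianInt)
  · rw [hχ.zero_of_dvd p _ hp hc]
    symm
    rw [jacobiSym.eq_zero_iff]
    refine ⟨hq.ne_zero, ?_⟩
    have h1 : (q : ℤ) ∣ c * c := by
      obtain ⟨d, hd⟩ := hc
      have := congrArg Zsqrtd.norm hd
      rw [Zsqrtd.norm_mul, Zsqrtd.norm_intCast, hN] at this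
      exact ⟨_, this⟩
    have h2 : (q : ℤ) ∣ c := by
      rcases (Nat.prime_iff_prime_int.1 hq).dvd_or_dvd h1 with h | h <;> exact h
    rw [Int.gcd_comm, Int.gcd_eq_natAbs_left h2] 
    simpa using hq.ne_one
  · have hqc : ¬ (q : ℤ) ∣ c := fun h => hc (cast_dvd_of hpq h)
    apply chi_eq hχ hp ho hc
    · apply jacobiSym.eq_one_or_neg_one
      have := (Int.isCoprime_iff_gcd_eq_one).1
        ((Nat.prime_iff_prime_int.1 hq).coprime_iff_not_dvd.2 hqc)
      rwa [Int.gcd_comm]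
    · rw [hN, Int.toNat_natCast]
      have := cast_dvd_of hpq (jac_dvd q hq (by omega) c)
      push_cast at this
      exact this

lemma inert_exp (q : ℕ) (h2 : q % 2 = 1) :
    ((Zsqrtd.norm (q : GaussianInt)).toNat - 1) / 2 = (q + 1) * ((q - 1) / 2) := by
  rw [Zsqrtd.norm_natCast]
  have : ((q : ℤ) * q).toNat = q * q := by
    rw [← Nat.cast_mul, Int.toNat_natCast]
  rw [this]
  obtain ⟨k, rfl⟩ : ∃ k, q = 2 * k + 1 := ⟨q / 2, by omega⟩
  have e : (2 * k + 1) * (2 * k + 1) - 1 = 2 * ((2 * k + 1 + 1) * k) := by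
    rw [Nat.sub_eq_iff_eq_add (by nlinarith)]; ring
  rw [e, Nat.mul_div_cancel_left _ (by norm_num)]
  simp

/-- Frobenius at an inert prime. -/
lemma frob (q : ℕ) (hq : q.Prime) (h3 : q % 4 = 3) (z : GaussianInt) :
    (q : GaussianInt) ∣ z ^ (q + 1) - ((Zsqrtd.norm z : ℤ) : GaussianInt) := by
  have : Fact q.Prime := ⟨hq⟩
  have fermat : ∀ c : ℤ, (q : GaussianInt) ∣ (c : GaussianInt) ^ q - (c : GaussianInt) := by
    intro c
    have h : (q : ℤ) ∣ c ^ q - c := by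
      rw [← ZMod.intCast_zmod_eq_zero_iff_dvd]
      push_cast
      rw [ZMod.pow_card, sub_self]
    have := cast_dvd_of (p := (q : GaussianInt)) (q := q) (by simp) h
    push_cast at this
    exact this
  have hi : ig ^ q = -ig := by
    obtain ⟨k, rfl⟩ : ∃ k, q = 4 * k + 3 := ⟨q / 4, by omega⟩
    rw [pow_add, pow_mul]
    have e4 : ig ^ 4 = 1 := by decide
    have e3 : ig ^ 3 = -ig := by decide
    rw [e4, e3, one_pow, one_mul]
  have hz : z = (z.re : GaussianInt) + (z.im : GaussianInt) * ig := by
    apply Zsqrtd.ext <;> simp [ig]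
  have hs : star z = (z.re : GaussianInt) - (z.im : GaussianInt) * ig := by
    apply Zsqrtd.ext <;> simp [ig]
  obtain ⟨r, hr⟩ := exists_add_pow_prime_eq hq (z.re : GaussianInt) ((z.im : GaussianInt) * ig)
  rw [← hz, mul_pow, hi] at hr
  obtain ⟨u, hu⟩ := fermat z.re
  obtain ⟨v, hv⟩ := fermat z.im
  have h1 : (q : GaussianInt) ∣ z ^ q - star z := by
    rw [hr, hs]
    refine ⟨u - v * ig + (z.re : GaussianInt) * ((z.im : GaussianInt) * ig) * r, ?_⟩
    linear_combination hu - ig * hv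
  rw [Zsqrtd.norm_eq_mul_conj, pow_succ, show z ^ q * z - z * star z = (z ^ q - star z) * z by ring]
  exact h1.mul_right z

/-- Inert case. -/
lemma chi_inert (hχ : IsQuadSym χ) {q : ℕ} (hq : q.Prime) (hp : Prime (q : GaussianInt))
    (ho : Od (q : GaussianInt)) {z : GaussianInt} (hz : ¬ (q : GaussianInt) ∣ z) :
    χ z (q : GaussianInt) = jacobiSym (Zsqrtd.norm z) q := by
  have : Fact q.Prime := ⟨hq⟩
  have h3 := GaussianInt.mod_four_eq_three_of_nat_prime_of_prime q hp
  have hf := frob q hq h3 z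
  apply chi_eq hχ hp ho hz
  · apply jacobiSym.eq_one_or_neg_one
    rw [Int.gcd_comm, ← Int.isCoprime_iff_gcd_eq_one,
      (Nat.prime_iff_prime_int.1 hq).coprime_iff_not_dvd]
    intro h
    have h1 := cast_dvd_of (p := (q : GaussianInt)) (q := q) (by simp) h
    have h2 := dvd_add hf h1
    rw [sub_add_cancel] at h2
    exact hz (hp.dvd_of_dvd_pow h2)
  · rw [inert_exp q (by omega), pow_mul]
    have h1 := hf.trans (sub_dvd_pow_sub_pow (z ^ (q + 1)) ((Zsqrtd.norm z : ℤ) : GaussianInt)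
      ((q - 1) / 2))
    have h2 := cast_dvd_of (p := (q : GaussianInt)) (q := q) (by simp)
      (jac_dvd q hq (by omega) (Zsqrtd.norm z))
    push_cast at h2
    have := dvd_add h1 h2
    rwa [sub_add_sub_cancel] at this

lemma jac_sum_sq {A B : ℤ} {N : ℕ} (hA : A % 2 = 1) (hN4 : N % 4 = 1) (h : (N : ℤ) = A ^ 2 + B ^ 2)
    (hg : A.gcd N = 1) : jacobiSym A N = 1 := by
  have hNo : Odd N := Nat.odd_iff.2 (by omega)
  have hAo : Odd A.natAbs := Int.natAbs_odd.2 (Int.odd_iff.2 hA)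
  have h1 : jacobiSym A N = jacobiSym (A.natAbs : ℤ) N := by
    rcases Int.natAbs_eq A with h | h
    · rw [← h]
    · conv_lhs => rw [h]
      rw [jacobiSym.neg _ hNo, ZMod.χ₄_nat_one_mod_four hN4, one_mul]
  rw [h1, jacobiSym.quadratic_reciprocity_one_mod_four' hAo hN4]
  have h2 : jacobiSym (N : ℤ) A.natAbs = jacobiSym (B ^ 2) A.natAbs := by
    apply jacobiSym.mod_left'
    apply Int.ModEq.symm
    rw [Int.modEq_iff_dvd, h, add_sub_cancel_right, Int.natAbs_dvd]
    exact dvd_pow_self A (by norm_num)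
  rw [h2]
  apply jacobiSym.sq_one'
  have hc : IsCoprime A (B ^ 2) := by
    have h3 := Int.isCoprime_iff_gcd_eq_one.2 hg
    rw [h] at h3
    have := h3.add_mul_left_right (-A)
    rwa [show A ^ 2 + B ^ 2 + A * -A = B ^ 2 by ring] at this
  have hc2 : IsCoprime A B := IsCoprime.of_mul_right_left (by rwa [sq] at hc)
  have := Int.isCoprime_iff_gcd_eq_one.1 hc2.symm
  rw [Int.gcd, Int.natAbs_natCast]
  exact this

lemma split_half (hχ : IsQuadSym χ) {p w : GaussianInt} (hp : Prime p) (ho : Od p) {q : ℕ} (hq : q.Prime)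
    (hN : Zsqrtd.norm p = q) :
    χ w p = jacobiSym (w.re * p.re + w.im * p.im) q := by
  rw [← chi_split hχ hp ho hq hN]
  have h1 : p ∣ (p.re : GaussianInt) * w - ((w.re * p.re + w.im * p.im : ℤ) : GaussianInt) := by
    refine ⟨(w.im : GaussianInt) * ig, ?_⟩
    apply Zsqrtd.ext
    · simp [ig]
      try ring
    · simp [ig]
      try ring
  have h4 := norm_od_mod_four ho
  rw [hN] at h4
  have hN' : (q : ℤ) = p.re ^ 2 + p.im ^ 2 := by rw [← hN, Zsqrtd.norm_def]; ring
  have hqp := Nat.prime_iff_prime_int.1 hq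
  have h2 : χ (p.re : GaussianInt) p = 1 := by
    rw [chi_split hχ hp ho hq hN]
    refine jac_sum_sq ho.1 (by omega) hN' ?_
    rw [Int.gcd_comm, ← Int.isCoprime_iff_gcd_eq_one, hqp.coprime_iff_not_dvd]
    intro hd
    have hd2 : (q : ℤ) ∣ p.im := by
      apply hqp.dvd_of_dvd_pow (n := 2)
      have : (q : ℤ) ∣ p.re ^ 2 + p.im ^ 2 := by rw [← hN']
      exact (Int.dvd_add_right (dvd_pow hd (by norm_num))).1 this
    obtain ⟨a, ha⟩ := hd
    obtain ⟨b, hb⟩ := hd2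
    rw [ha, hb] at hN'
    have hq0 : (q : ℤ) ≠ 0 := hqp.ne_zero
    have : (q : ℤ) * (a ^ 2 + b ^ 2) = 1 := by
      apply mul_left_cancel₀ hq0
      linear_combination -hN'
    exact hqp.not_isUnit (IsUnit.of_mul_eq_one _ this)
  rw [← chi_congr hχ ho h1, chi_mul hχ ho, h2, one_mul]

lemma chi_neg_left (hχ : IsQuadSym χ) {n : GaussianInt} (ho : Od n) (a : GaussianInt) :
    χ (-a) n = χ a n := by
  rw [← neg_one_mul, chi_mul hχ ho, chi_neg_one hχ ho, one_mul]

lemma chi_neg_right (hχ : IsQuadSym χ) {n : GaussianInt} (ho : Od n) (a : GaussianInt) :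
    χ a (-n) = χ a n := by
  rw [← neg_one_mul, hχ.mul_den _ _ _ (od_not_omega (od_neg od_one)) (od_not_omega ho),
    hχ.unit_den a (-1) isUnit_one.neg, one_mul]

/-- Reciprocity with an inert prime. -/
lemma recip_inert (hχ : IsQuadSym χ) {q : ℕ} {p : GaussianInt} (hq : q.Prime)
    (hqp : Prime (q : GaussianInt)) (hoq : Od (q : GaussianInt)) (hp : Prime p) (ho : Od p)
    (hc : IsCoprime (q : GaussianInt) p) : χ (q : GaussianInt) p = χ p (q : GaussianInt) := by
  rw [chi_inert hχ hq hqp hoq (not_dvd_of_coprime hqp hc.symm)]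
  rcases classify hp ho with ⟨l, hl, hN⟩ | ⟨l, hl, h⟩
  · rw [hN]
    have := chi_split hχ hp ho hl hN (q : ℤ)
    rw [Int.cast_natCast] at this
    rw [this]
    have h4 := norm_od_mod_four ho
    rw [hN] at h4
    have hqo : q % 2 = 1 := by
      have := hoq.1
      simp at this
      omega
    exact jacobiSym.quadratic_reciprocity_one_mod_four' (Nat.odd_iff.2 hqo) (by omega)
  · have key : ∀ {a b : ℕ}, b.Prime → Prime (b : GaussianInt) → Od (b : GaussianInt) →
        IsCoprime (a : GaussianInt) (b : GaussianInt) → χ (a : GaussianInt) (b : GaussianInt) = 1 := by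
      intro a b hb hbp hob hab
      have hnd := not_dvd_of_coprime hbp hab
      rw [chi_inert hχ hb hbp hob hnd, Zsqrtd.norm_natCast, ← sq]
      apply jacobiSym.sq_one'
      rw [Int.gcd_comm, ← Int.isCoprime_iff_gcd_eq_one,
        (Nat.prime_iff_prime_int.1 hb).coprime_iff_not_dvd]
      intro h
      apply hnd
      simpa using (Zsqrtd.intCast_dvd_intCast (d := -1) b a).2 h
    have hpl : Prime (l : GaussianInt) ∧ Od (l : GaussianInt) := by
      rcases h with rfl | rfl
      · exact ⟨hp, ho⟩
      · exact ⟨by simpa using hp.neg, by simpa using od_neg ho⟩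
    have hcl : IsCoprime (q : GaussianInt) (l : GaussianInt) := by
      rcases h with rfl | rfl
      · exact hc
      · simpa using hc.neg_right
    have e1 : χ (q : GaussianInt) p = 1 := by
      rcases h with rfl | rfl
      · exact key hl hpl.1 hpl.2 hcl
      · rw [chi_neg_right hχ hpl.2]
        exact key hl hpl.1 hpl.2 hcl
    have e2 : jacobiSym (Zsqrtd.norm p) q = 1 := by
      have e := key hq hqp hoq hcl.symm
      rw [chi_inert hχ hq hqp hoq (not_dvd_of_coprime hqp hcl.symm)] at e
      refine Eq.trans ?_ e
      rcases h with rfl | rfl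
      · rfl
      · rw [Zsqrtd.norm_neg]
    rw [e1, e2]

lemma recip_prime (hχ : IsQuadSym χ) {p w : GaussianInt} (hp : Prime p) (ho : Od p)
    (hw : Prime w) (how : Od w) (hc : IsCoprime p w) : χ p w = χ w p := by
  rcases classify hp ho with ⟨q, hq, hN⟩ | ⟨q, hq, h⟩
  · rcases classify hw how with ⟨l, hl, hM⟩ | ⟨l, hl, h⟩
    · have e1 := split_half hχ (w := w) hp ho hq hN
      have e2 := split_half hχ (w := p) hw how hl hM
      rw [show p.re * w.re + p.im * w.im = w.re * p.re + w.im * p.im by ring] at e2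
      have p1 := chi_pm hχ how hc
      have p2 := chi_pm hχ ho hc.symm
      set A := w.re * p.re + w.im * p.im with hA
      have hJ : jacobiSym A (l * q) = χ p w * χ w p := by
        rw [jacobiSym.mul_right' _ hl.ne_zero hq.ne_zero, e1, e2]
      have hJ1 : jacobiSym A (l * q) = 1 := by
        have a1 := norm_od_mod_four ho
        have a2 := norm_od_mod_four how
        refine jac_sum_sq (B := w.re * p.im - w.im * p.re) ?_ ?_ ?_ ?_
        · have h1 := emod_two_mul w.re p.re
          have h2 := emod_two_mul w.im p.im
          rw [ho.1, how.1] at h1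
          rw [ho.2, how.2] at h2
          omega
        · rw [hN] at a1
          rw [hM] at a2
          rw [Nat.mul_mod, show l % 4 = 1 by omega, show q % 4 = 1 by omega]
        · push_cast
          rw [← hN, ← hM, Zsqrtd.norm_def, Zsqrtd.norm_def]
          ring
        · by_contra hne
          have := (jacobiSym.eq_zero_iff (a := A) (b := l * q)).2
            ⟨mul_ne_zero hl.ne_zero hq.ne_zero, hne⟩
          rw [hJ] at this
          rcases p1 with p1 | p1 <;> rcases p2 with p2 | p2 <;> rw [p1, p2] at this <;> simp at this
      rw [hJ] at hJ1
      rcases p1 with p1 | p1 <;> rcases p2 with p2 | p2 <;> rw [p1, p2] at hJ1 ⊢ <;> simp at hJ1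
    · rcases h with rfl | rfl
      · exact (recip_inert hχ hl hw how hp ho hc.symm).symm
      · have how' : Od (l : GaussianInt) := by simpa using od_neg how
        have hw' : Prime (l : GaussianInt) := by simpa using hw.neg
        rw [chi_neg_right hχ how', chi_neg_left hχ ho]
        exact (recip_inert hχ hl hw' how' hp ho (by simpa using hc.symm.neg_left)).symm
  · rcases h with rfl | rfl
    · exact recip_inert hχ hq hp ho hw how hc
    · have ho' : Od (q : GaussianInt) := by simpa using od_neg ho
      have hp' : Prime (q : GaussianInt) := by simpa using hp.neg
      rw [chi_neg_right hχ ho', chi_neg_left hχ how]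
      exact recip_inert hχ hq hp' ho' hw how (by simpa using hc.neg_left)

lemma recip (hχ : IsQuadSym χ) {m n : GaussianInt} (hm : Od m) (hn : Od n) (hc : IsCoprime m n) :
    χ m n = χ n m := by
  have h1 : ∀ n : GaussianInt, Od n → χ 1 n = 1 := by
    intro n hn
    have := chi_mul hχ hn (-1) (-1)
    rw [chi_neg_one hχ hn] at this
    simpa using this
  have step : ∀ p, Prime p → Od p → ∀ n, Od n → IsCoprime p n → χ p n = χ n p := by
    intro p hp hop n hn hc
    refine od_induction (P := fun n => IsCoprime p n → χ p n = χ n p) ?_ ?_ ?_ hn hc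
    · intro _
      rw [hχ.unit_den _ _ isUnit_one, h1 p hop]
    · intro _
      rw [hχ.unit_den _ _ isUnit_one.neg, chi_neg_one hχ hop]
    · intro w a hw how hoa ih hc
      rw [hχ.mul_den _ _ _ (od_not_omega how) (od_not_omega hoa), chi_mul hχ hop,
        ih hc.of_mul_right_right, recip_prime hχ hp hop hw how hc.of_mul_right_left]
  refine od_induction (P := fun m => IsCoprime m n → χ m n = χ n m) ?_ ?_ ?_ hm hc
  · intro _
    rw [hχ.unit_den _ _ isUnit_one, h1 n hn]
  · intro _
    rw [hχ.unit_den _ _ isUnit_one.neg, chi_neg_one hχ hn]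
  · intro w a hw how hoa ih hc
    rw [hχ.mul_den _ _ _ (od_not_omega how) (od_not_omega hoa), chi_mul hχ hn,
      ih hc.of_mul_left_right, step w hw how n hn hc.of_mul_left_left]

/-- Complete residue systems exist. -/
lemma exists_crs {n : GaussianInt} (hn : n ≠ 0) :
    ∃ S : Finset GaussianInt, ∀ z : GaussianInt, ∃! x, x ∈ S ∧ n ∣ (z - x) := by
  let I : Ideal GaussianInt := Ideal.span {n}
  have hN : Zsqrtd.norm n ≠ 0 := fun h => hn (GaussianInt.norm_eq_zero.1 h)
  have hNd := dvd_norm_self n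
  set N := Zsqrtd.norm n with hNdef
  have hNpos : 0 < N := lt_of_le_of_ne (Zsqrtd.norm_nonneg (by norm_num) n) (Ne.symm hN)
  let B : Set (ℤ × ℤ) := Set.Icc 0 N ×ˢ Set.Icc 0 N
  have hB : B.Finite := (Set.finite_Icc 0 N).prod (Set.finite_Icc 0 N)
  let f : ℤ × ℤ → GaussianInt := fun t => (Ideal.Quotient.mk I ⟨t.1, t.2⟩).out
  have hS : (f '' B).Finite := hB.image f
  have hout : ∀ q : GaussianInt ⧸ I, Ideal.Quotient.mk I q.out = q := fun q => Quotient.out_eq q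
  have hmk : ∀ a b : GaussianInt, n ∣ a - b ↔ Ideal.Quotient.mk I a = Ideal.Quotient.mk I b := by
    intro a b
    rw [Ideal.Quotient.eq, Ideal.mem_span_singleton]
  refine ⟨hS.toFinset, fun z => ⟨(Ideal.Quotient.mk I z).out, ⟨?_, ?_⟩, ?_⟩⟩
  · rw [Set.Finite.mem_toFinset]
    refine ⟨(z.re % N, z.im % N), ⟨⟨Int.emod_nonneg _ hN, (Int.emod_lt_of_pos _ hNpos).le⟩,
      ⟨Int.emod_nonneg _ hN, (Int.emod_lt_of_pos _ hNpos).le⟩⟩, ?_⟩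
    have : Ideal.Quotient.mk I ⟨z.re % N, z.im % N⟩ = Ideal.Quotient.mk I z := by
      rw [← hmk]
      refine hNd.trans ?_
      rw [Zsqrtd.intCast_dvd]
      constructor
      · simp only [Zsqrtd.re_sub]
        exact Int.ModEq.dvd (Int.mod_modEq _ _).symm
      · simp only [Zsqrtd.im_sub]
        exact Int.ModEq.dvd (Int.mod_modEq _ _).symm
    simp only [f, this]
  · rw [hmk, hout]
  · rintro y ⟨hy, hd⟩
    rw [Set.Finite.mem_toFinset] at hy
    obtain ⟨t, -, rfl⟩ := hy
    rw [hmk, hout] at hd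
    rw [hd]

lemma crs_inj {n : GaussianInt} {S : Finset GaussianInt}
    (hS : ∀ z : GaussianInt, ∃! x, x ∈ S ∧ n ∣ (z - x)) {x y : GaussianInt} (hx : x ∈ S) (hy : y ∈ S)
    (h : n ∣ x - y) : x = y :=
  (hS x).unique ⟨hx, by simp⟩ ⟨hy, h⟩

lemma gs_twist (hχ : IsQuadSym χ) {g : GaussianInt → GaussianInt → ℂ} (hg : IsGaussSum χ g)
    {n r s : GaussianInt} (hn : Od n) (hc : IsCoprime s n) :
    g (r * s) n = (starRingEnd ℂ) ((χ s n : ℂ)) * g r n := by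
  have hn0 := od_ne_zero hn
  obtain ⟨S, hS⟩ := exists_crs hn0
  have hinj : Set.InjOn (fun x => s * x) (S : Set GaussianInt) := by
    intro x hx y hy h
    apply crs_inj hS hx hy
    apply hc.symm.dvd_of_dvd_mul_left
    simp only at h
    rw [mul_sub, h, sub_self]
    exact dvd_zero _
  have hT : ∀ z : GaussianInt, ∃! x, x ∈ S.image (fun x => s * x) ∧ n ∣ (z - x) := by
    intro z
    obtain ⟨u, v, huv⟩ := hc
    obtain ⟨x, ⟨hx, hd⟩, -⟩ := hS (u * z)
    refine ⟨s * x, ⟨Finset.mem_image_of_mem _ hx, ?_⟩, ?_⟩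
    · obtain ⟨d, hd⟩ := hd
      refine ⟨s * d + v * z, ?_⟩
      linear_combination s * hd - z * huv
    · rintro y ⟨hy, hyd⟩
      obtain ⟨w, hw, rfl⟩ := Finset.mem_image.1 hy
      congr 1
      apply crs_inj hS hw hx
      have h1 : n ∣ u * z - w := by
        obtain ⟨d, hd⟩ := hyd
        refine ⟨u * d - v * w, ?_⟩
        linear_combination u * hd + w * huv
      have := dvd_sub hd h1
      convert this using 1
      ring
  have e1 := hg (r * s) n hn0 S hS
  have e2 := hg r n hn0 _ hT
  rw [Finset.sum_image hinj] at e2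
  have e3 : g r n = (χ s n : ℂ) * g (r * s) n := by
    rw [e2, e1, Finset.mul_sum]
    apply Finset.sum_congr rfl
    intro x _
    rw [chi_mul hχ hn, ← mul_assoc r s x]
    push_cast
    ring
  rw [e3]
  rcases chi_pm hχ hn hc with h | h <;> rw [h] <;> simp

lemma eT_add (z w : ℂ) : eT (z + w) = eT z * eT w := by
  unfold eT
  rw [← Complex.exp_add, map_add]
  congr 1
  ring

lemma gs_mul (hχ : IsQuadSym χ) {g : GaussianInt → GaussianInt → ℂ} (hg : IsGaussSum χ g)
    {m n k : GaussianInt} (hm : Od m) (hn : Od n) (hc : IsCoprime m n) :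
    g k (m * n) = g k m * g k n := by
  have hn0 := od_ne_zero hn
  have hm0 := od_ne_zero hm
  obtain ⟨S, hS⟩ := exists_crs hm0
  obtain ⟨T, hT⟩ := exists_crs hn0
  let f : GaussianInt × GaussianInt → GaussianInt := fun t => n * t.1 + m * t.2
  have hsep : ∀ a ∈ S ×ˢ T, ∀ b ∈ S ×ˢ T, m * n ∣ f a - f b → a = b := by
    rintro ⟨a, b⟩ hab ⟨c, d⟩ hcd h
    rw [Finset.mem_product] at hab hcd
    simp only [f] at h
    have h1 : m ∣ a - c := by
      apply hc.dvd_of_dvd_mul_left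
      obtain ⟨e, he⟩ := h
      exact ⟨n * e - (b - d), by linear_combination he⟩
    have h2 : n ∣ b - d := by
      apply hc.symm.dvd_of_dvd_mul_left
      obtain ⟨e, he⟩ := h
      exact ⟨m * e - (a - c), by linear_combination he⟩
    exact Prod.ext (crs_inj hS hab.1 hcd.1 h1) (crs_inj hT hab.2 hcd.2 h2)
  have hinj : Set.InjOn f (S ×ˢ T : Finset _) := by
    intro a ha b hb h
    exact hsep a ha b hb (by rw [h, sub_self]; exact dvd_zero _)
  have hU : ∀ z : GaussianInt, ∃! x, x ∈ (S ×ˢ T).image f ∧ m * n ∣ (z - x) := by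
    intro z
    obtain ⟨u, v, huv⟩ := id hc
    obtain ⟨x, ⟨hx, hxd⟩, -⟩ := hS (v * z)
    obtain ⟨y, ⟨hy, hyd⟩, -⟩ := hT (u * z)
    have hxy : m * n ∣ z - f (x, y) := by
      obtain ⟨d, hd⟩ := hxd
      obtain ⟨e, he⟩ := hyd
      refine ⟨d + e, ?_⟩
      simp only [f]
      linear_combination n * hd + m * he - z * huv
    have hxyS : (x, y) ∈ S ×ˢ T := Finset.mem_product.2 ⟨hx, hy⟩
    refine ⟨f (x, y), ⟨Finset.mem_image_of_mem _ hxyS, hxy⟩, ?_⟩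
    rintro w ⟨hw, hwd⟩
    obtain ⟨t, ht, rfl⟩ := Finset.mem_image.1 hw
    congr 1
    apply hsep t ht _ hxyS
    have := dvd_sub hxy hwd
    convert this using 1
    ring
  rw [hg k (m * n) (mul_ne_zero hm0 hn0) _ hU, hg k m hm0 S hS, hg k n hn0 T hT,
    Finset.sum_image hinj, Finset.sum_product, Finset.sum_mul_sum]
  apply Finset.sum_congr rfl
  intro x _
  apply Finset.sum_congr rfl
  intro y _
  have c1 : χ (f (x, y)) (m * n) = χ x m * χ y n := by
    rw [hχ.mul_den _ _ _ (od_not_omega hm) (od_not_omega hn)]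
    have a1 : χ (f (x, y)) m = χ n m * χ x m := by
      rw [← chi_mul hχ hm]
      exact chi_congr hχ hm ⟨y, by simp only [f]; ring⟩
    have a2 : χ (f (x, y)) n = χ m n * χ y n := by
      rw [← chi_mul hχ hn]
      exact chi_congr hχ hn ⟨x, by simp only [f]; ring⟩
    rw [a1, a2, recip hχ hm hn hc]
    rcases chi_pm hχ hm hc.symm with h | h <;> rw [h] <;> ring
  have hmC : GaussianInt.toComplex m ≠ 0 := by
    rwa [Ne, GaussianInt.toComplex_eq_zero]
  have hnC : GaussianInt.toComplex n ≠ 0 := by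
    rwa [Ne, GaussianInt.toComplex_eq_zero]
  have c2 : GaussianInt.toComplex (k * f (x, y)) / GaussianInt.toComplex (m * n) =
      GaussianInt.toComplex (k * x) / GaussianInt.toComplex m +
        GaussianInt.toComplex (k * y) / GaussianInt.toComplex n := by
    simp only [f, map_mul, map_add]
    field_simp
  rw [c1, c2, eT_add]
  push_cast
  ring

end chi

/-- twisting and multiplicativity of quadratic Gauss sums
(Lemma 2.1 (i) of the paper): for primary `n, m`,
(i) `g(rs, n) = conj((s/n)) g(r, n)` when `(s,n) = 1`, and
(ii) `g(k, mn) = g(k, m) g(k, n)` when `(m,n) = 1`. -/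
theorem gauss_sum_twist_and_mult
    (χ : GaussianInt → GaussianInt → ℤ) (hχ : IsQuadSym χ)
    (g : GaussianInt → GaussianInt → ℂ) (hg : IsGaussSum χ g)
    (n m r s k : GaussianInt) (hn : IsPrimary n) (hm : IsPrimary m) :
    (IsCoprime s n → g (r * s) n = (starRingEnd ℂ) ((χ s n : ℂ)) * g r n) ∧
      (IsCoprime m n → g k (m * n) = g k m * g k n) := by
  have hn' := od_of_primary hn
  have hm' := od_of_primary hm
  exact ⟨fun h => gs_twist hχ hg hn' h, fun h => gs_mul hχ hg hm' hn' h⟩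
end
end

section
/- Let ϖ be a primary prime in O_K, let k ∈ O_K, and let ϖ^h be the largest power of ϖ dividing k (with h = ∞ if k = 0). Then for any integer l ≥ 1: g(k, ϖ^l) = 0 if l ≤ h and l is odd; g(k, ϖ^l) = φ_{[i]}(ϖ^l) if l ≤ h and l is even; g(k, ϖ^l) = −N(ϖ)^{l−1} if l = h+1 is even; g(k, ϖ^l) = (i·k·ϖ^{−h} / ϖ) · N(ϖ)^{l−1/2} if l = h+1 is odd; and g(k, ϖ^l) = 0 if l ≥ h+2. -/
open Complex Real Filter Topology
open scoped BigOperators Classical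

noncomputable section

/-- `φ_{[i]}(n)`: the number of elements of `(ℤ[i]/(n))ˣ`. -/
def phiG (n : GaussianInt) : ℕ := Nat.card ((GaussianInt ⧸ Ideal.span {n})ˣ)

open Complex in
lemma cpow_half_real_mul {r : ℝ} (hr : 0 < r) {x : ℂ} (hx : x ≠ 0) :
    ((r : ℂ) * x) ^ (1 / 2 : ℂ) = ((Real.sqrt r : ℝ) : ℂ) * x ^ (1 / 2 : ℂ) := by
  have hr' : (r : ℂ) ≠ 0 := by exact_mod_cast hr.ne'
  rw [Complex.cpow_def_of_ne_zero (mul_ne_zero hr' hx), Complex.cpow_def_of_ne_zero hx,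
    Complex.log_ofReal_mul hr hx, add_mul, Complex.exp_add]
  congr 1
  rw [Real.sqrt_eq_rpow, Real.rpow_def_of_pos hr]
  push_cast
  rfl

/-- Theta sum over a residue class. -/
def Tres (q r : ℕ) (w : ℂ) : ℂ :=
  ∑' m : ℤ, Complex.exp (-Real.pi * w * ((m : ℂ) * q + r) ^ 2)

lemma Tres_eq (q r : ℕ) (hq : 0 < q) (w : ℂ) (hw : 0 < w.re) :
    w ^ (1 / 2 : ℂ) * Tres q r w =
      (1 / q : ℂ) * ∑' n : ℤ, Complex.exp (2 * Real.pi * Complex.I * n * r / q) *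
        Complex.exp (-Real.pi * (1 / w) / q ^ 2 * n ^ 2) := by
  have hw0 : w ≠ 0 := by rintro rfl; simp at hw
  have hqc : (q : ℂ) ≠ 0 := by exact_mod_cast hq.ne'
  have hqr : (0 : ℝ) < q := by exact_mod_cast hq
  have ha : 0 < ((q ^ 2 : ℝ) * w : ℂ).re := by
    rw [Complex.re_ofReal_mul]; positivity
  have key := Complex.tsum_exp_neg_quadratic ha (-(r * q * w))
  have hroot : ((q ^ 2 : ℝ) * w : ℂ) ^ (1 / 2 : ℂ) = q * w ^ (1 / 2 : ℂ) := by
    have := cpow_half_real_mul (r := (q:ℝ)^2) (by positivity) hw0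
    rw [Real.sqrt_sq hqr.le] at this
    push_cast at this ⊢
    exact this
  rw [hroot] at key
  have hwr : w ^ (1 / 2 : ℂ) ≠ 0 := by
    rw [Ne, Complex.cpow_eq_zero_iff]; tauto
  have h1 : Tres q r w = Complex.exp (-Real.pi * w * r ^ 2) *
      ∑' n : ℤ, Complex.exp (-Real.pi * ((q ^ 2 : ℝ) * w : ℂ) * n ^ 2 +
        2 * Real.pi * (-(r * q * w)) * n) := by
    rw [Tres, ← tsum_mul_left]
    congr 1; ext m
    rw [← Complex.exp_add]
    congr 1
    push_cast
    ring
  rw [h1, key]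
  have h2 : ∀ n : ℤ, Complex.exp (-Real.pi * w * r ^ 2) *
      Complex.exp (-Real.pi / ((q ^ 2 : ℝ) * w : ℂ) * (n + Complex.I * (-(r * q * w))) ^ 2) =
      Complex.exp (2 * Real.pi * Complex.I * n * r / q) *
        Complex.exp (-Real.pi * (1 / w) / q ^ 2 * n ^ 2) := by
    intro n
    rw [← Complex.exp_add, ← Complex.exp_add]
    congr 1
    push_cast
    field_simp
    ring_nf
    rw [Complex.I_sq]
    ring
  rw [← tsum_congr h2, tsum_mul_left]
  field_simp

lemma Tres_tendsto (q r : ℕ) (hq : 0 < q) {l : Filter ℝ} (w : ℝ → ℂ)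
    (hw : ∀ᶠ t in l, 0 < (w t).re) (hw' : Tendsto (fun t => (1 / w t).re) l atTop) :
    Tendsto (fun t => w t ^ (1 / 2 : ℂ) * Tres q r (w t)) l (𝓝 (1 / q)) := by
  have hqr : (0 : ℝ) < q := by exact_mod_cast hq
  have key : Tendsto (fun t => ∑' n : ℤ, Complex.exp (2 * Real.pi * Complex.I * n * r / q) *
        Complex.exp (-Real.pi * (1 / w t) / q ^ 2 * n ^ 2)) l
        (𝓝 (∑' n : ℤ, if n = 0 then 1 else 0)) := by
    have hnorm : ∀ (n : ℤ) (t : ℝ), ‖Complex.exp (2 * Real.pi * Complex.I * n * r / q) *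
        Complex.exp (-Real.pi * (1 / w t) / q ^ 2 * n ^ 2)‖ =
        Real.exp (-(Real.pi / q ^ 2 * n ^ 2) * (1 / w t).re) := by
      intro n t
      rw [norm_mul, Complex.norm_exp, Complex.norm_exp]
      have e1 : (2 * Real.pi * Complex.I * n * r / q : ℂ) =
        ((2 * Real.pi * n * r / q : ℝ) : ℂ) * Complex.I := by push_cast; ring
      have e2 : (-Real.pi * (1 / w t) / q ^ 2 * n ^ 2 : ℂ) =
        ((-(Real.pi / q ^ 2 * n ^ 2) : ℝ) : ℂ) * (1 / w t) := by push_cast; ring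
      rw [e1, e2, Complex.re_ofReal_mul, Complex.re_ofReal_mul]
      simp
    refine tendsto_tsum_of_dominated_convergence
      (bound := fun n : ℤ => Real.exp (-Real.pi * ((1 / q ^ 2 : ℝ) * n ^ 2 - 2 * 0 * |n|))) ?_ ?_ ?_
    · have := summable_pow_mul_jacobiTheta₂_term_bound 0 (T := (1 / q ^ 2 : ℝ)) (by positivity) 0
      simpa using this
    · intro n
      by_cases hn : n = 0
      · subst hn; simpa using tendsto_const_nhds
      · rw [if_neg hn, tendsto_zero_iff_norm_tendsto_zero]
        simp_rw [hnorm]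
        refine Real.tendsto_exp_atBot.comp ?_
        apply Filter.Tendsto.const_mul_atTop_of_neg _ hw'
        have : (0:ℝ) < (n:ℝ) ^ 2 := by positivity
        have := Real.pi_pos
        have : 0 < Real.pi / q ^ 2 * n ^ 2 := by positivity
        linarith
    · filter_upwards [hw'.eventually_ge_atTop 1] with t ht n
      rw [hnorm]
      apply Real.exp_le_exp.mpr
      have : 0 ≤ Real.pi / q ^ 2 * (n:ℝ) ^ 2 := by positivity
      have e : -Real.pi * ((1 / q ^ 2 : ℝ) * n ^ 2 - 2 * 0 * |n|) = -(Real.pi / q ^ 2 * (n:ℝ) ^ 2) := by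
        ring
      push_cast at e ⊢
      rw [e]
      nlinarith
  rw [tsum_ite_eq] at key
  have := key.const_mul (1 / q : ℂ)
  rw [mul_one] at this
  refine this.congr' ?_
  filter_upwards [hw] with t ht
  rw [Tres_eq q r hq _ ht]

/-- splitting by residue classes -/
lemma split_res (q : ℕ) (hq : 0 < q) (w c : ℂ) (hw : 0 < w.re) (hc : c.re = 0)
    (hper : ∀ m : ℤ, ∀ r : ℕ, Complex.exp (c * ((m : ℂ) * q + r) ^ 2) = Complex.exp (c * r ^ 2)) :
    ∑' n : ℤ, Complex.exp ((-Real.pi * w + c) * (n : ℂ) ^ 2) =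
      ∑ r ∈ Finset.range q, Complex.exp (c * r ^ 2) * Tres q r w := by
  have : NeZero q := ⟨hq.ne'⟩
  have hs : Summable (fun n : ℤ => Complex.exp ((-Real.pi * w + c) * (n : ℂ) ^ 2)) := by
    have := summable_pow_mul_jacobiTheta₂_term_bound 0 (T := w.re) hw 0
    refine Summable.of_norm ?_
    convert this using 2 with n
    rw [Complex.norm_exp]
    have e : ((-Real.pi * w + c) * (n : ℂ) ^ 2) = ((n ^ 2 : ℝ) : ℂ) * (((-Real.pi : ℝ) : ℂ) * w + c) := by
      push_cast; ring
    rw [e, Complex.re_ofReal_mul, Complex.add_re, Complex.re_ofReal_mul, hc]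
    simp
    ring
  rw [← (Int.divModEquiv q).symm.tsum_eq, ((Equiv.prodComm _ _).tsum_eq _).symm]
  have hs' := ((Equiv.prodComm _ _).summable_iff.mpr ((Int.divModEquiv q).symm.summable_iff.mpr hs))
  erw [hs'.tsum_prod]
  rw [tsum_fintype, Finset.sum_range]
  refine Finset.sum_congr rfl fun r _ => ?_
  rw [Tres, ← tsum_mul_left]
  refine tsum_congr fun m => ?_
  rw [← hper m r, ← Complex.exp_add]
  simp [Int.divModEquiv]
  ring_nf

theorem gauss_quadratic_sum (p : ℕ) (hp : p % 4 = 1) :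
    ∑ r ∈ Finset.range p, Complex.exp (2 * Real.pi * Complex.I * r ^ 2 / p) = (Real.sqrt p : ℝ) := by
  have hp0 : 0 < p := by omega
  have hpr : (0 : ℝ) < p := by exact_mod_cast hp0
  have hpc : (p : ℂ) ≠ 0 := by exact_mod_cast hp0.ne'
  set G := ∑ r ∈ Finset.range p, Complex.exp (2 * Real.pi * Complex.I * r ^ 2 / p) with hG
  let A : ℝ → ℂ := fun t => ∑' n : ℤ, Complex.exp (-Real.pi * ((t : ℂ) - 2 * Complex.I / p) * (n : ℂ) ^ 2)
  have hA1 : ∀ t : ℝ, 0 < t → A t = ∑ r ∈ Finset.range p, Complex.exp (2 * Real.pi * Complex.I * r ^ 2 / p) * Tres p r t := by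
    intro t ht
    have := split_res p hp0 (t : ℂ) (2 * Real.pi * Complex.I / p) (by simpa using ht)
      (by
        have : (2 * Real.pi * Complex.I / p : ℂ) = ((2 * Real.pi / p : ℝ) : ℂ) * Complex.I := by
          push_cast; ring
        rw [this, Complex.re_ofReal_mul]; simp)
      (by
        intro m r
        rw [Complex.exp_eq_exp_iff_exists_int]
        refine ⟨m ^ 2 * p + 2 * m * r, ?_⟩
        push_cast
        field_simp
        ring)
    simp only [A]
    convert this using 1
    · refine tsum_congr fun n => ?_
      congr 1; field_simp; ring
    · refine Finset.sum_congr rfl fun r _ => ?_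
      congr 2; ring
  have lim1 : Tendsto (fun t : ℝ => (t : ℂ) ^ (1 / 2 : ℂ) * A t) (𝓝[>] 0) (𝓝 (G / p)) := by
    have : Tendsto (fun t : ℝ => ∑ r ∈ Finset.range p, Complex.exp (2 * Real.pi * Complex.I * r ^ 2 / p) *
        ((t : ℂ) ^ (1 / 2 : ℂ) * Tres p r t)) (𝓝[>] 0)
        (𝓝 (∑ r ∈ Finset.range p, Complex.exp (2 * Real.pi * Complex.I * r ^ 2 / p) * (1 / p))) := by
      refine tendsto_finsetSum _ fun r _ => Tendsto.const_mul _ ?_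
      refine Tres_tendsto p r hp0 (fun t => (t : ℂ)) ?_ ?_
      · filter_upwards [self_mem_nhdsWithin] with t ht
        simpa using ht
      · have : (fun t : ℝ => (1 / (t : ℂ)).re) = fun t => t⁻¹ := by
          ext t
          rw [one_div, ← Complex.ofReal_inv, Complex.ofReal_re]
        rw [this]
        exact tendsto_inv_nhdsGT_zero
    rw [← Finset.sum_mul, ← hG, mul_one_div] at this
    refine this.congr' ?_
    filter_upwards [self_mem_nhdsWithin] with t ht
    rw [hA1 t ht, Finset.mul_sum]
    refine Finset.sum_congr rfl fun r _ => ?_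
    ring
  -- the dual side
  let u : ℝ → ℂ := fun t => 1 / (1 + (t * p / 2 : ℝ) * Complex.I)
  let w : ℝ → ℂ := fun t => ((p ^ 2 * t / 4 : ℝ) : ℂ) * u t
  have hu1 : ∀ t : ℝ, (1 + (t * p / 2 : ℝ) * Complex.I : ℂ) ≠ 0 := by
    intro t h
    have := congrArg Complex.re h
    simp at this
  have hu0 : ∀ t : ℝ, u t ≠ 0 := fun t => one_div_ne_zero (hu1 t)
  have hure : ∀ t : ℝ, 0 < (u t).re := by
    intro t
    simp only [u]
    rw [one_div, Complex.inv_re]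
    refine div_pos (by simp) (Complex.normSq_pos.mpr (hu1 t))
  have hwre : ∀ t : ℝ, 0 < t → 0 < (w t).re := by
    intro t ht
    simp only [w]
    rw [Complex.re_ofReal_mul]
    have := hure t
    positivity
  have hwinv : ∀ t : ℝ, 0 < t → (1 / w t).re = 4 / p ^ 2 * t⁻¹ := by
    intro t ht
    have : 1 / w t = ((4 / p ^ 2 * t⁻¹ : ℝ) : ℂ) * (1 + (t * p / 2 : ℝ) * Complex.I) := by
      simp only [w, u]
      have := hu1 t
      have h3 : (t : ℂ) ≠ 0 := by exact_mod_cast ht.ne'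
      push_cast at this ⊢
      field_simp
    rw [this, Complex.re_ofReal_mul]
    simp
  have hucont : Tendsto u (𝓝[>] 0) (𝓝 1) := by
    have : ContinuousAt u 0 := by
      refine ContinuousAt.div continuousAt_const ?_ (hu1 0)
      fun_prop
    have h0 : u 0 = 1 := by simp [u]
    rw [ContinuousAt, h0] at this
    exact this.mono_left nhdsWithin_le_nhds
  have hA2 : ∀ t : ℝ, 0 < t → A t = 1 / ((t : ℂ) - 2 * Complex.I / p) ^ (1 / 2 : ℂ) *
      (Tres 2 0 (w t) - Complex.I * Tres 2 1 (w t)) := by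
    intro t ht
    have hre : 0 < ((t : ℂ) - 2 * Complex.I / p).re := by
      have : ((t : ℂ) - 2 * Complex.I / p) = (t : ℂ) + ((-2 / p : ℝ) : ℂ) * Complex.I := by
        push_cast; ring
      rw [this]; simpa using ht
    have hne : ((t : ℂ) - 2 * Complex.I / p) ≠ 0 := by
      intro h; rw [h] at hre; simp at hre
    simp only [A]
    rw [Complex.tsum_exp_neg_mul_int_sq hre]
    congr 1
    have := split_res 2 (by norm_num) (w t) (-(Real.pi * Complex.I * p / 2)) (hwre t ht)
      (by
        have : (-(Real.pi * Complex.I * p / 2) : ℂ) = ((-(Real.pi * p / 2) : ℝ) : ℂ) * Complex.I := by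
          push_cast; ring
        rw [this, Complex.re_ofReal_mul]; simp)
      (by
        intro m r
        rw [Complex.exp_eq_exp_iff_exists_int]
        refine ⟨-(p * (m ^ 2 + m * r)), ?_⟩
        push_cast
        ring)
    rw [Finset.sum_range_succ, Finset.sum_range_one] at this
    have hexp : Complex.exp (-(Real.pi * Complex.I * p / 2) * ((1 : ℕ) : ℂ) ^ 2) = -Complex.I := by
      have : Complex.exp (-(Real.pi * Complex.I * p / 2) * ((1 : ℕ) : ℂ) ^ 2) =
          Complex.exp (-(Real.pi / 2 * Complex.I)) := by
        rw [Complex.exp_eq_exp_iff_exists_int]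
        obtain ⟨s, hs⟩ : ∃ s : ℕ, p = 4 * s + 1 := ⟨p / 4, by omega⟩
        refine ⟨-(s : ℤ), ?_⟩
        have h4 : (p : ℂ) = 4 * (s : ℂ) + 1 := by exact_mod_cast hs
        rw [h4]
        push_cast
        ring
      rw [this, Complex.exp_neg, Complex.exp_pi_div_two_mul_I, Complex.inv_I]
    rw [hexp] at this
    rw [sub_eq_add_neg (Tres 2 0 (w t)), ← neg_mul Complex.I]
    convert this using 1
    · refine tsum_congr fun n => ?_
      congr 2
      simp only [w, u]
      have h1 := hu1 t
      have h5 : ((t : ℂ) - 2 * Complex.I / p) = (-2 * Complex.I / p) * (1 + (t * p / 2 : ℝ) * Complex.I) := by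
        push_cast
        field_simp
        ring_nf
        rw [Complex.I_sq]; ring
      rw [h5]
      have h7 : (1 + (t * p / 2 : ℝ) * Complex.I : ℂ) = (2 + t * p * Complex.I) / 2 := by
        push_cast; ring
      rw [h7] at h1 ⊢
      have h6 : (2 + t * p * Complex.I : ℂ) ≠ 0 := fun h => h1 (by rw [h]; simp)
      push_cast
      have := Complex.I_ne_zero
      obtain ⟨D, hD⟩ : ∃ D : ℂ, D = 2 + t * p * Complex.I := ⟨_, rfl⟩
      rw [← hD] at h6 ⊢
      field_simp
      linear_combination (-4 : ℂ) * hD + 4 * D * Complex.I_sq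
    · simp
  have hs : (-(2 * Complex.I / p)) ^ (1 / 2 : ℂ) = (1 - Complex.I) / (Real.sqrt p : ℝ) := by
    have hx : 0 < ((1 - Complex.I) / (Real.sqrt p : ℝ) : ℂ).re := by
      rw [Complex.div_ofReal_re]
      simp [hp0]
    have := Complex.sq_cpow_two_inv hx
    rw [← this, one_div]
    congr 1
    rw [div_pow, ← Complex.ofReal_pow, Real.sq_sqrt hpr.le]
    push_cast
    ring_nf
    rw [Complex.I_sq]; ring
  have hsne : (1 - Complex.I : ℂ) / (Real.sqrt p : ℝ) ≠ 0 := by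
    have : 0 < Real.sqrt p := Real.sqrt_pos.mpr hpr
    refine div_ne_zero ?_ (by exact_mod_cast this.ne')
    intro h
    have := congrArg Complex.re h
    simp at this
  have hslit : -(2 * Complex.I / p) ∈ Complex.slitPlane := by
    right
    have : (-(2 * Complex.I / p) : ℂ) = ((-(2 / p) : ℝ) : ℂ) * Complex.I := by push_cast; ring
    rw [this, Complex.im_ofReal_mul]
    simp [hp0.ne']
  have lim2 : Tendsto (fun t : ℝ => (t : ℂ) ^ (1 / 2 : ℂ) * A t) (𝓝[>] 0)
      (𝓝 (1 / ((1 - Complex.I) / (Real.sqrt p : ℝ)) * ((2 / p) * (1 / 1 ^ (1 / 2 : ℂ)) * (1 / (2 : ℕ) - Complex.I * (1 / (2 : ℕ)))))) := by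
    have l1 : Tendsto (fun t : ℝ => 1 / ((t : ℂ) - 2 * Complex.I / p) ^ (1 / 2 : ℂ)) (𝓝[>] 0)
        (𝓝 (1 / ((1 - Complex.I) / (Real.sqrt p : ℝ)))) := by
      refine Tendsto.div tendsto_const_nhds ?_ hsne
      rw [← hs]
      have : ContinuousAt (fun t : ℝ => ((t : ℂ) - 2 * Complex.I / p) ^ (1 / 2 : ℂ)) 0 := by
        refine ContinuousAt.cpow (by fun_prop) continuousAt_const (by simpa using hslit)
      have h2 := this.tendsto.mono_left (nhdsWithin_le_nhds (s := Set.Ioi 0))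
      simpa using h2
    have l2 : Tendsto (fun t => 1 / (u t) ^ (1 / 2 : ℂ)) (𝓝[>] 0) (𝓝 (1 / 1 ^ (1 / 2 : ℂ))) := by
      refine Tendsto.div tendsto_const_nhds ?_ (by simp)
      exact hucont.cpow tendsto_const_nhds (by simp)
    have hT : ∀ s : ℕ, Tendsto (fun t => w t ^ (1 / 2 : ℂ) * Tres 2 s (w t)) (𝓝[>] 0) (𝓝 (1 / (2 : ℕ))) := by
      intro s
      refine Tres_tendsto 2 s (by norm_num) w ?_ ?_
      · filter_upwards [self_mem_nhdsWithin] with t ht using hwre t ht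
      · have : Tendsto (fun t : ℝ => 4 / (p : ℝ) ^ 2 * t⁻¹) (𝓝[>] 0) atTop :=
          Tendsto.const_mul_atTop (by positivity) tendsto_inv_nhdsGT_zero
        refine this.congr' ?_
        filter_upwards [self_mem_nhdsWithin] with t ht
        rw [hwinv t ht]
    refine (l1.mul ((l2.const_mul (2 / p : ℂ)).mul ((hT 0).sub ((hT 1).const_mul Complex.I)))).congr' ?_
    filter_upwards [self_mem_nhdsWithin] with t ht
    have ht' : 0 < t := ht
    rw [hA2 t ht]
    have hwt : w t ^ (1 / 2 : ℂ) = (p / 2 : ℂ) * (t : ℂ) ^ (1 / 2 : ℂ) * u t ^ (1 / 2 : ℂ) := by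
      simp only [w]
      rw [cpow_half_real_mul (by positivity) (hu0 t)]
      congr 1
      have : (p ^ 2 * t / 4 : ℝ) = (p / 2) ^ 2 * t := by ring
      rw [this, Real.sqrt_mul (by positivity), Real.sqrt_sq (by positivity)]
      have := cpow_half_real_mul ht' (x := 1) one_ne_zero
      simp only [mul_one, Complex.one_cpow] at this
      rw [this]
      push_cast
      ring
    rw [hwt]
    have hut : u t ^ (1 / 2 : ℂ) ≠ 0 := by
      rw [Ne, Complex.cpow_eq_zero_iff]
      have := hu0 t
      tauto
    field_simp
  have := tendsto_nhds_unique lim1 lim2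
  have hsq : ((Real.sqrt p : ℝ) : ℂ) ≠ 0 := by
    have : 0 < Real.sqrt p := Real.sqrt_pos.mpr hpr
    exact_mod_cast this.ne'
  have h1I : (1 - Complex.I : ℂ) ≠ 0 := by
    intro h
    have := congrArg Complex.re h
    simp at this
  have h2 : G = p * (G / p) := by field_simp
  rw [h2, this]
  simp only [Complex.one_cpow]
  push_cast
  field_simp
lemma eT_eq (z : ℂ) : eT z = Complex.exp (2 * Real.pi * Complex.I * (z.im : ℂ)) := by
  unfold eT
  congr 2
  rw [← sub_div, Complex.sub_conj]
  push_cast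
  field_simp [Complex.I_ne_zero]

/-- The additive character `x ↦ ẽ(x/n)` on Gaussian integers. -/
def Ech (n x : GaussianInt) : ℂ := eT (GaussianInt.toComplex x / GaussianInt.toComplex n)

lemma Ech_add (n x y : GaussianInt) : Ech n (x + y) = Ech n x * Ech n y := by
  unfold Ech
  rw [eT_eq, eT_eq, eT_eq, ← Complex.exp_add, map_add, add_div, Complex.add_im]
  congr 1
  push_cast
  ring

lemma Ech_of_dvd {n x : GaussianInt} (hn : n ≠ 0) (h : n ∣ x) : Ech n x = 1 := by
  obtain ⟨y, rfl⟩ := h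
  have hn' : GaussianInt.toComplex n ≠ 0 := by rwa [Ne, GaussianInt.toComplex_eq_zero]
  unfold Ech
  rw [eT_eq, map_mul, mul_div_cancel_left₀ _ hn', Complex.exp_eq_one_iff, ← GaussianInt.intCast_im]
  exact ⟨y.im, by push_cast; ring⟩

lemma Ech_congr {n x y : GaussianInt} (hn : n ≠ 0) (h : n ∣ x - y) : Ech n x = Ech n y := by
  have : x = y + (x - y) := by ring
  rw [this, Ech_add, Ech_of_dvd hn h, mul_one]

lemma Ech_mul_cancel {n m x : GaussianInt} (hm : m ≠ 0) : Ech (m * n) (m * x) = Ech n x := by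
  have hm' : GaussianInt.toComplex m ≠ 0 := by rwa [Ne, GaussianInt.toComplex_eq_zero]
  unfold Ech
  rw [map_mul, map_mul, mul_div_mul_left _ _ hm']

lemma dvd_of_Ech {n x : GaussianInt} (hn : n ≠ 0) (h1 : Ech n x = 1) (h2 : Ech n (ig * x) = 1) :
    n ∣ x := by
  have hn' : GaussianInt.toComplex n ≠ 0 := by rwa [Ne, GaussianInt.toComplex_eq_zero]
  have key : ∀ z : ℂ, eT z = 1 → ∃ m : ℤ, z.im = m := by
    intro z hz
    rw [eT_eq, Complex.exp_eq_one_iff] at hz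
    obtain ⟨m, hm⟩ := hz
    refine ⟨m, ?_⟩
    have h2 : (2 * Real.pi * Complex.I : ℂ) ≠ 0 := Complex.two_pi_I_ne_zero
    rw [mul_comm] at hm
    have := mul_right_cancel₀ h2 hm
    exact_mod_cast this
  obtain ⟨m1, hm1⟩ := key _ h1
  obtain ⟨m2, hm2⟩ := key _ h2
  refine ⟨⟨m2, m1⟩, ?_⟩
  apply GaussianInt.toComplex_injective
  rw [map_mul]
  have hi : GaussianInt.toComplex ig = Complex.I := by simp [ig, GaussianInt.toComplex_def]
  rw [map_mul, hi, mul_div_assoc, Complex.I_mul_im] at hm2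
  have : GaussianInt.toComplex x / GaussianInt.toComplex n = GaussianInt.toComplex ⟨m2, m1⟩ := by
    apply Complex.ext
    · rw [hm2, GaussianInt.re_toComplex]
    · rw [hm1, GaussianInt.im_toComplex]
  rw [← this]
  field_simp

/-- integral basis -/
def gBasis : Module.Basis (Fin 2) ℤ GaussianInt :=
  Module.Basis.ofEquivFun
    { toFun := fun z => ![z.re, z.im]
      invFun := fun v => ⟨v 0, v 1⟩
      left_inv := fun z => by simp
      right_inv := fun v => by ext i; fin_cases i <;> simp
      map_add' := fun x y => by ext i; fin_cases i <;> simp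
      map_smul' := fun m x => by ext i; fin_cases i <;> simp }

instance : Module.Free ℤ GaussianInt := Module.Free.of_basis gBasis
instance : Module.Finite ℤ GaussianInt := Module.Finite.of_basis gBasis

lemma algNorm_eq (z : GaussianInt) : Algebra.norm ℤ z = z.norm := by
  rw [Algebra.norm_eq_matrix_det gBasis, Matrix.det_fin_two]
  simp only [Algebra.leftMulMatrix_eq_repr_mul]
  simp [gBasis, Zsqrtd.norm_def]

/-- The residue ring. -/
abbrev QR (n : GaussianInt) := GaussianInt ⧸ Ideal.span {n}

lemma card_QR (n : GaussianInt) : Nat.card (QR n) = n.norm.natAbs := by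
  rw [← algNorm_eq, ← Ideal.absNorm_span_singleton, Ideal.absNorm_apply, Submodule.cardQuot_apply]

instance (n : GaussianInt) [NeZero n] : Finite (QR n) := by
  apply Nat.finite_of_card_ne_zero
  rw [card_QR, Int.natAbs_ne_zero, Ne, GaussianInt.norm_eq_zero]
  exact NeZero.ne n

instance (n : GaussianInt) [NeZero n] : Fintype (QR n) := Fintype.ofFinite _

instance (ϖ : GaussianInt) [h : Fact (Prime ϖ)] : NeZero ϖ := ⟨h.out.ne_zero⟩

instance (ϖ : GaussianInt) [h : Fact (Prime ϖ)] : Field (QR ϖ) :=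
  haveI : (Ideal.span {ϖ}).IsMaximal :=
    PrincipalIdealRing.isMaximal_of_irreducible h.out.irreducible
  Ideal.Quotient.field _

/-- reduction map -/
abbrev mkQ (n : GaussianInt) : GaussianInt →+* QR n := Ideal.Quotient.mk (Ideal.span {n})

lemma mkQ_eq_iff {n x y : GaussianInt} : mkQ n x = mkQ n y ↔ n ∣ x - y := by
  rw [Ideal.Quotient.eq, Ideal.mem_span_singleton]

lemma mkQ_eq_zero {n x : GaussianInt} : mkQ n x = 0 ↔ n ∣ x := by
  rw [Ideal.Quotient.eq_zero_iff_mem, Ideal.mem_span_singleton]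

lemma mkQ_out {n : GaussianInt} (q : QR n) : mkQ n (Quotient.out q) = q := Quotient.out_eq q

/-- The additive character on the residue ring. -/
def psiQ (n : GaussianInt) [NeZero n] : AddChar (QR n) ℂ where
  toFun q := Ech n (Quotient.out q)
  map_zero_eq_one' := Ech_of_dvd (NeZero.ne n) (by rw [← mkQ_eq_zero, mkQ_out])
  map_add_eq_mul' a b := by
    rw [← Ech_add]
    apply Ech_congr (NeZero.ne n)
    rw [← mkQ_eq_iff, map_add, mkQ_out, mkQ_out, mkQ_out]

lemma psiQ_mk (n : GaussianInt) [NeZero n] (x : GaussianInt) : psiQ n (mkQ n x) = Ech n x := by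
  change Ech n _ = _
  apply Ech_congr (NeZero.ne n)
  rw [← mkQ_eq_iff, mkQ_out]

lemma psiQ_ne_one (ϖ : GaussianInt) [h : Fact (Prime ϖ)] : psiQ ϖ ≠ 1 := by
  intro h1
  have key : ∀ x, Ech ϖ x = 1 := fun x => by rw [← psiQ_mk, h1, AddChar.one_apply]
  have := dvd_of_Ech h.out.ne_zero (key 1) (key _)
  exact h.out.not_isUnit (isUnit_of_dvd_one this)

/-- expression of `g` as a sum over the residue ring -/
lemma g_eq {χ : GaussianInt → GaussianInt → ℤ} {g : GaussianInt → GaussianInt → ℂ}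
    (hg : IsGaussSum χ g) (r n : GaussianInt) [NeZero n] :
    g r n = ∑ q : QR n, (χ (Quotient.out q) n : ℂ) * psiQ n (mkQ n r * q) := by
  have hinj : Function.Injective (fun q : QR n => (Quotient.out q : GaussianInt)) := by
    intro a b hab
    rw [← mkQ_out a, ← mkQ_out b]
    exact congrArg _ hab
  rw [hg r n (NeZero.ne n) (Finset.univ.image fun q : QR n => (Quotient.out q : GaussianInt)) ?_,
    Finset.sum_image (fun a _ b _ hab => hinj hab)]
  · refine Finset.sum_congr rfl fun q _ => ?_
    conv_rhs => rw [← mkQ_out q, ← map_mul, psiQ_mk, mkQ_out]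
    rfl
  · intro z
    refine ⟨Quotient.out (mkQ n z), ⟨Finset.mem_image_of_mem _ (Finset.mem_univ _), ?_⟩, ?_⟩
    · rw [← mkQ_eq_iff, mkQ_out]
    · rintro y ⟨hy, hzy⟩
      obtain ⟨q, -, rfl⟩ := Finset.mem_image.mp hy
      rw [← mkQ_eq_iff, mkQ_out] at hzy
      rw [hzy]

lemma gauss_eq_sq {F : Type*} [Field F] [Fintype F] [DecidableEq F] (hF : ringChar F ≠ 2)
    {ψ : AddChar F ℂ} (hψ : ψ ≠ 1) :
    ∑ x : F, (quadraticChar F x : ℂ) * ψ x = ∑ x : F, ψ (x ^ 2) := by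
  have h0 := AddChar.sum_eq_zero_of_ne_one hψ
  rw [← Finset.sum_fiberwise Finset.univ (fun x : F => x ^ 2) (fun x => ψ (x ^ 2))]
  have : ∀ y : F, ∑ x ∈ Finset.univ.filter (fun x : F => x ^ 2 = y), ψ (x ^ 2) =
      (quadraticChar F y : ℂ) * ψ y + ψ y := by
    intro y
    rw [Finset.sum_congr rfl (g := fun _ => ψ y)
      (fun x hx => by rw [(Finset.mem_filter.mp hx).2]), Finset.sum_const, nsmul_eq_mul]
    have h1 := quadraticChar_card_sqrts hF y
    have h2 : ({x : F | x ^ 2 = y} : Set F).toFinset = Finset.univ.filter (fun x : F => x ^ 2 = y) := by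
      ext; simp
    rw [h2] at h1
    have h3 : ((Finset.univ.filter (fun x : F => x ^ 2 = y)).card : ℂ) = quadraticChar F y + 1 := by
      exact_mod_cast h1
    rw [h3]; ring
  rw [Finset.sum_congr rfl (fun y _ => this y), Finset.sum_add_distrib, h0, add_zero]

lemma gauss_shift {F : Type*} [Field F] [Fintype F] [DecidableEq F]
    (ψ : AddChar F ℂ) {t : F} (ht : t ≠ 0) :
    ∑ x : F, (quadraticChar F x : ℂ) * ψ (t * x) =
      quadraticChar F t * ∑ x : F, (quadraticChar F x : ℂ) * ψ x := by
  rw [← Equiv.sum_comp (Equiv.mulLeft₀ t ht) (fun x => (quadraticChar F x : ℂ) * ψ x), Finset.mul_sum]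
  refine Finset.sum_congr rfl fun x _ => ?_
  change _ = (quadraticChar F t : ℂ) * ((quadraticChar F (t * x) : ℂ) * ψ (t * x))
  have hm : (quadraticChar F (t * x) : ℂ) = quadraticChar F t * quadraticChar F x := by
    rw [← Int.cast_mul, map_mul]
  rw [hm]
  have : (quadraticChar F t : ℂ) ^ 2 = 1 := by exact_mod_cast quadraticChar_sq_one ht
  linear_combination (-(quadraticChar F x : ℂ) * ψ (t * x)) * this
lemma primary_parity {ϖ : GaussianInt} (h : IsPrimary ϖ) : Odd ϖ.re ∧ Even ϖ.im := by
  obtain ⟨y, hy⟩ := h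
  have hw : ωg ^ 3 = ⟨-2, 2⟩ := by
    simp only [ωg, pow_succ, pow_zero, one_mul]
    ext <;> simp
  rw [hw] at hy
  have h1 := congrArg Zsqrtd.re hy
  have h2 := congrArg Zsqrtd.im hy
  simp at h1 h2
  constructor
  · rw [Int.odd_iff]; omega
  · rw [Int.even_iff]; omega

lemma not_omega_dvd {ϖ : GaussianInt} (h : IsPrimary ϖ) : ¬ ωg ∣ ϖ := by
  rintro ⟨y, hy⟩
  obtain ⟨h3, h4⟩ := primary_parity h
  have h1 := congrArg Zsqrtd.re hy
  have h2 := congrArg Zsqrtd.im hy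
  simp [ωg] at h1 h2
  rw [Int.odd_iff] at h3
  rw [Int.even_iff] at h4
  omega

lemma norm_eq (z : GaussianInt) : z.norm = z.re ^ 2 + z.im ^ 2 := by
  rw [Zsqrtd.norm_def]; ring

lemma card_QR_mod {ϖ : GaussianInt} [NeZero ϖ] (h : IsPrimary ϖ) : Fintype.card (QR ϖ) % 4 = 1 := by
  obtain ⟨⟨a, h1⟩, ⟨b, h2⟩⟩ := primary_parity h
  rw [← Nat.card_eq_fintype_card, card_QR]
  have : ϖ.norm = 4 * (a ^ 2 + a + b ^ 2) + 1 := by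
    rw [norm_eq, h1, h2]; ring
  have := GaussianInt.norm_nonneg ϖ
  omega

lemma card_QR_cast (ϖ : GaussianInt) [NeZero ϖ] : (Fintype.card (QR ϖ) : ℝ) = Nm ϖ := by
  rw [← Nat.card_eq_fintype_card, card_QR, Nm, GaussianInt.natCast_natAbs_norm]

lemma ringChar_QR {ϖ : GaussianInt} [Fact (Prime ϖ)] (h : IsPrimary ϖ) : ringChar (QR ϖ) ≠ 2 := by
  intro h2
  have := FiniteField.even_card_of_char_two h2
  have := card_QR_mod h
  omega

lemma Ech_formula (ϖ x : GaussianInt) (hϖ : ϖ ≠ 0) :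
    Ech ϖ x = Complex.exp (2 * Real.pi * Complex.I * ((x * star ϖ).im / (ϖ.norm : ℤ) : ℂ)) := by
  unfold Ech
  rw [eT_eq]
  congr 2
  have hn : GaussianInt.toComplex ϖ ≠ 0 := by rwa [Ne, GaussianInt.toComplex_eq_zero]
  have hs : GaussianInt.toComplex (star ϖ) ≠ 0 := by
    rw [GaussianInt.toComplex_star]; simpa using hn
  have : GaussianInt.toComplex x / GaussianInt.toComplex ϖ =
      GaussianInt.toComplex (x * star ϖ) / ((ϖ.norm : ℝ) : ℂ) := by
    have h2 : (((ϖ.norm : ℤ) : ℝ) : ℂ) = GaussianInt.toComplex ϖ * GaussianInt.toComplex (star ϖ) := by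
      rw [← map_mul, ← Zsqrtd.norm_eq_mul_conj, map_intCast]; simp
    rw [h2, map_mul]
    field_simp
  rw [this, Complex.div_ofReal_im, ← GaussianInt.intCast_im]
  push_cast
  rfl

lemma prime_cases {ϖ : GaussianInt} (hp : Prime ϖ) (h : IsPrimary ϖ) :
    ϖ.im = 0 ∨ IsCoprime ϖ.re ϖ.im := by
  by_cases hb : ϖ.im = 0
  · exact Or.inl hb
  right
  rw [Int.isCoprime_iff_gcd_eq_one]
  obtain ⟨a, ha⟩ := Int.gcd_dvd_left ϖ.re ϖ.im
  obtain ⟨b, hb'⟩ := Int.gcd_dvd_right ϖ.re ϖ.im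
  have ha0 : ϖ.re ≠ 0 := by
    have := (primary_parity h).1
    rintro h0; rw [h0] at this; simp at this
  set d := Int.gcd ϖ.re ϖ.im
  have : ϖ = ((d : ℤ) : GaussianInt) * ⟨a, b⟩ := by
    rw [Zsqrtd.smul_val]
    ext
    · exact ha
    · exact hb'
  rcases hp.irreducible.isUnit_or_isUnit this with h1 | h1
  · rw [← Zsqrtd.norm_eq_one_iff' (by norm_num), Zsqrtd.norm_intCast] at h1
    have h2 : d * d = 1 := by exact_mod_cast h1
    exact Nat.eq_one_of_mul_eq_one_left h2
  · exfalso
    rw [← Zsqrtd.norm_eq_one_iff' (by norm_num), norm_eq] at h1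
    simp only at h1
    have ha1 : a ≠ 0 := by rintro rfl; simp at ha; exact ha0 ha
    have hb1 : b ≠ 0 := by rintro rfl; simp at hb'; exact hb hb'
    have := Int.one_le_abs ha1
    have := Int.one_le_abs hb1
    have e1 := sq_abs a
    have e2 := sq_abs b
    nlinarith

lemma sign_split {ϖ : GaussianInt} [hp : Fact (Prime ϖ)] (h : IsPrimary ϖ)
    (hc : IsCoprime ϖ.re ϖ.im) :
    ∑ x : QR ϖ, (quadraticChar (QR ϖ) x : ℂ) * psiQ ϖ x =
      quadraticChar (QR ϖ) (mkQ ϖ ig) * (Real.sqrt (Nm ϖ) : ℝ) := by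
  have hϖ : ϖ ≠ 0 := hp.out.ne_zero
  obtain ⟨p, hpdef⟩ : ∃ p : ℕ, (p : ℤ) = ϖ.norm := ⟨ϖ.norm.natAbs, GaussianInt.abs_natCast_norm ϖ⟩
  have hcard : Fintype.card (QR ϖ) = p := by
    rw [← Nat.card_eq_fintype_card, card_QR, ← hpdef, Int.natAbs_natCast]
  have hp4 : p % 4 = 1 := hcard ▸ card_QR_mod h
  have hp0 : 0 < p := by omega
  have hnorm : (p : ℤ) = ϖ.re ^ 2 + ϖ.im ^ 2 := by rw [hpdef, norm_eq]
  have hchar : CharP (QR ϖ) p := by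
    constructor
    intro m
    have : ((m : ℕ) : QR ϖ) = mkQ ϖ (m : GaussianInt) := by simp
    rw [this, mkQ_eq_zero]
    constructor
    · rintro ⟨y, hy⟩
      have e : ((p : ℤ) : GaussianInt) * y = (m : ℤ) * star ϖ := by
        rw [hpdef, Zsqrtd.norm_eq_mul_conj]
        push_cast
        rw [hy]; ring
      have h1 := congrArg Zsqrtd.re e
      have h2 := congrArg Zsqrtd.im e
      simp at h1 h2
      obtain ⟨u, v, huv⟩ := hc
      have : (p : ℤ) ∣ m := ⟨u * y.re - v * y.im, by
        linear_combination (-(m : ℤ)) * huv - u * h1 + v * h2⟩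
      exact_mod_cast this
    · rintro ⟨y, rfl⟩
      have : ((p * y : ℕ) : GaussianInt) = ϖ * (star ϖ * y) := by
        rw [← mul_assoc, ← Zsqrtd.norm_eq_mul_conj, ← hpdef]; push_cast; rfl
      rw [this]
      exact dvd_mul_right _ _
  have hprime : p.Prime := by
    have : p ≠ 0 := by omega
    exact (CharP.char_is_prime_or_zero (QR ϖ) p).resolve_right this
  have : Fact p.Prime := ⟨hprime⟩
  -- `re` is a square
  have hae : IsCoprime ϖ.re (p : ℤ) := by
    rw [hnorm]
    have : IsCoprime ϖ.re (ϖ.im ^ 2) := hc.pow_right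
    have h2 := this.add_mul_left_right ϖ.re
    have e : ϖ.re ^ 2 + ϖ.im ^ 2 = ϖ.im ^ 2 + ϖ.re * ϖ.re := by ring
    rw [e]
    exact h2
  obtain ⟨t, s, hts⟩ := hae
  have hpz : mkQ ϖ ((p : ℤ) : GaussianInt) = 0 := by
    rw [map_intCast]; push_cast; exact CharP.cast_eq_zero _ _
  have hat : mkQ ϖ ((t : ℤ) : GaussianInt) * mkQ ϖ ((ϖ.re : ℤ) : GaussianInt) = 1 := by
    have := congrArg (fun z : ℤ => mkQ ϖ (z : GaussianInt)) hts
    simp only [Int.cast_add, Int.cast_mul, map_add, map_mul, Int.cast_one, map_one] at this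
    rw [hpz] at this
    simpa using this
  have ht0 : mkQ ϖ ((t : ℤ) : GaussianInt) ≠ 0 := left_ne_zero_of_mul_eq_one hat
  have ha0 : mkQ ϖ ((ϖ.re : ℤ) : GaussianInt) ≠ 0 := right_ne_zero_of_mul_eq_one hat
  have hneg1 : IsSquare (-1 : QR ϖ) := by
    rw [FiniteField.isSquare_neg_one_iff, hcard]; omega
  have hsq : IsSquare (mkQ ϖ ((ϖ.re : ℤ) : GaussianInt)) := by
    have hodd : Odd ϖ.re.natAbs := by
      rw [Int.natAbs_odd]; exact (primary_parity h).1
    have hJ : jacobiSym (ϖ.re.natAbs : ℤ) p = 1 := by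
      rw [← jacobiSym.quadratic_reciprocity_one_mod_four hp4 hodd]
      have : (p : ℤ) % (ϖ.re.natAbs : ℤ) = (ϖ.im ^ 2) % (ϖ.re.natAbs : ℤ) := by
        rw [hnorm]
        apply Int.ModEq.symm
        rw [Int.modEq_iff_dvd, Int.natAbs_dvd]
        exact ⟨ϖ.re, by ring⟩
      rw [jacobiSym.mod_left, this, ← jacobiSym.mod_left]
      apply jacobiSym.sq_one'
      have h3 := Int.isCoprime_iff_gcd_eq_one.mp hc.symm
      unfold Int.gcd at h3 ⊢
      rwa [Int.natAbs_natCast]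
    have hS := ZMod.isSquare_of_jacobiSym_eq_one hJ
    have hS2 := hS.map (ZMod.castHom (dvd_refl p) (QR ϖ))
    have hS3 : IsSquare (((ϖ.re.natAbs : ℤ) : QR ϖ)) := by
      rwa [map_intCast] at hS2
    rw [map_intCast]
    rcases Int.natAbs_eq ϖ.re with e | e
    · rw [e]; exact hS3
    · rw [e]
      have : (((-(ϖ.re.natAbs : ℤ) : ℤ)) : QR ϖ) = (-1) * ((ϖ.re.natAbs : ℤ) : QR ϖ) := by
        push_cast; ring
      rw [this]
      exact hneg1.mul hS3
  have hca := (quadraticChar_one_iff_isSquare ha0).mpr hsq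
  have hct : quadraticChar (QR ϖ) (mkQ ϖ ((t : ℤ) : GaussianInt)) = 1 := by
    have := congrArg (quadraticChar (QR ϖ)) hat
    rwa [map_mul, hca, mul_one, map_one] at this
  have hi0 : mkQ ϖ ig ≠ 0 := by
    intro h0
    rw [mkQ_eq_zero] at h0
    have hu : IsUnit ig := by
      rw [← Zsqrtd.norm_eq_one_iff' (by norm_num), norm_eq]; simp [ig]
    exact hp.out.not_isUnit (isUnit_of_dvd_unit h0 hu)
  set T := mkQ ϖ ig * mkQ ϖ ((t : ℤ) : GaussianInt) with hT
  have hT0 : T ≠ 0 := mul_ne_zero hi0 ht0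
  have hshift := gauss_shift (psiQ ϖ) hT0
  have hcT : quadraticChar (QR ϖ) T = quadraticChar (QR ϖ) (mkQ ϖ ig) := by
    rw [hT, map_mul, hct, mul_one]
  have hψ' : AddChar.mulShift (psiQ ϖ) T ≠ 1 := by
    have := AddChar.IsPrimitive.of_ne_one (psiQ_ne_one ϖ)
    exact this hT0
  have hsqs := gauss_eq_sq (ringChar_QR h) hψ'
  simp only [AddChar.mulShift_apply] at hsqs
  -- evaluate
  have heval : ∑ x : QR ϖ, psiQ ϖ (T * x ^ 2) = (Real.sqrt p : ℝ) := by
    rw [← gauss_quadratic_sum p hp4, Finset.sum_range]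
    have hbij : Function.Bijective (fun r : Fin p => ((r : ℕ) : QR ϖ)) := by
      rw [Fintype.bijective_iff_injective_and_card]
      refine ⟨?_, by rw [hcard, Fintype.card_fin]⟩
      intro x y hxy
      exact Fin.ext (CharP.natCast_injOn_Iio (QR ϖ) p x.2 y.2 hxy)
    symm
    refine Fintype.sum_bijective _ hbij _ _ fun r => ?_
    have e : T * (((r : ℕ) : QR ϖ)) ^ 2 = mkQ ϖ (ig * (t : ℤ) * ((r : ℕ) : GaussianInt) ^ 2) := by
      rw [hT]; simp
    rw [e, psiQ_mk, Ech_formula _ _ hϖ, Complex.exp_eq_exp_iff_exists_int]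
    refine ⟨s * (r : ℕ) ^ 2, ?_⟩
    have him : (ig * (t : ℤ) * ((r : ℕ) : GaussianInt) ^ 2 * star ϖ).im = t * (r : ℕ) ^ 2 * ϖ.re := by
      obtain ⟨R, hR⟩ : ∃ R : ℤ, R = ((r : ℕ) : ℤ) ^ 2 := ⟨_, rfl⟩
      have : (((r : ℕ) : GaussianInt) ^ 2) = (R : GaussianInt) := by rw [hR]; push_cast; rfl
      rw [this, ← hR]
      simp [ig]
    rw [him, ← hpdef]
    have hts' : (t : ℂ) * ϖ.re + s * p = 1 := by exact_mod_cast hts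
    have hpc : (p : ℂ) ≠ 0 := by exact_mod_cast hp0.ne'
    push_cast
    field_simp
    linear_combination (-((r : ℕ) : ℂ) ^ 2) * hts'
  rw [hsqs, heval, hcT] at hshift
  have hNm : Nm ϖ = p := by rw [← card_QR_cast, hcard]
  rw [hNm, hshift, ← mul_assoc]
  have : (quadraticChar (QR ϖ) (mkQ ϖ ig) : ℂ) ^ 2 = 1 := by
    exact_mod_cast quadraticChar_sq_one hi0
  rw [← sq, this, one_mul]

lemma sign_inert {ϖ : GaussianInt} [hp : Fact (Prime ϖ)] (h : IsPrimary ϖ)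
    (hc : ϖ.im = 0) :
    ∑ x : QR ϖ, (quadraticChar (QR ϖ) x : ℂ) * psiQ ϖ x =
      quadraticChar (QR ϖ) (mkQ ϖ ig) * (Real.sqrt (Nm ϖ) : ℝ) := by
  have hϖ : ϖ ≠ 0 := hp.out.ne_zero
  obtain ⟨a, ha⟩ : ∃ a, a = ϖ.re := ⟨_, rfl⟩
  have hϖa : ϖ = (a : GaussianInt) := by ext <;> simp [ha, hc]
  have hodd : Odd a := ha ▸ (primary_parity h).1
  have ha0 : a ≠ 0 := by rintro rfl; simp at hodd
  obtain ⟨q, hq⟩ : ∃ q, q = a.natAbs := ⟨_, rfl⟩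
  have hq0 : 0 < q := by omega
  have hqodd : Odd q := by rw [hq, Int.natAbs_odd]; exact hodd
  have hcard : Fintype.card (QR ϖ) = q * q := by
    rw [← Nat.card_eq_fintype_card, card_QR, hϖa, Zsqrtd.norm_intCast, Int.natAbs_mul, hq]
  have hdvd : ∀ z : ℤ, a ∣ z ↔ (q : ℤ) ∣ z := fun z => by rw [hq, Int.natAbs_dvd]
  have hi : quadraticChar (QR ϖ) (mkQ ϖ ig) = 1 := by
    have hi0 : mkQ ϖ ig ≠ 0 := by
      intro h0
      rw [mkQ_eq_zero] at h0
      have hu : IsUnit ig := by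
        rw [← Zsqrtd.norm_eq_one_iff' (by norm_num), norm_eq]; simp [ig]
      exact hp.out.not_isUnit (isUnit_of_dvd_unit h0 hu)
    rcases quadraticChar_dichotomy hi0 with h1 | h1
    · exact h1
    · exfalso
      have := quadraticChar_eq_pow_of_char_ne_two' (ringChar_QR h) (mkQ ϖ ig)
      rw [h1, hcard] at this
      obtain ⟨j, hj⟩ : ∃ j, q * q / 2 = 4 * j := by
        obtain ⟨m, hm⟩ := hqodd
        obtain ⟨n, hn⟩ := Nat.even_mul_succ_self m
        refine ⟨n, ?_⟩
        have : q * q = 4 * (m * (m + 1)) + 1 := by rw [hm]; ring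
        omega
      have hi4 : ig ^ 4 = 1 := by
        simp only [ig, pow_succ, pow_zero, one_mul]
        ext <;> simp
      rw [hj, pow_mul, ← map_pow, hi4, map_one, one_pow] at this
      push_cast at this
      exact Ring.neg_one_ne_one_of_char_ne_two (ringChar_QR h) this
  rw [gauss_eq_sq (ringChar_QR h) (psiQ_ne_one ϖ), hi]
  have hNm : Nm ϖ = (q : ℝ) ^ 2 := by rw [← card_QR_cast, hcard]; push_cast; ring
  rw [hNm, Real.sqrt_sq (by positivity)]
  have hbij : Function.Bijective (fun r : Fin q × Fin q => mkQ ϖ ⟨(r.1 : ℕ), (r.2 : ℕ)⟩) := by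
    rw [Fintype.bijective_iff_injective_and_card]
    refine ⟨?_, by rw [hcard, Fintype.card_prod, Fintype.card_fin]⟩
    rintro ⟨x, y⟩ ⟨x', y'⟩ hxy
    simp only at hxy
    rw [mkQ_eq_iff, hϖa, Zsqrtd.intCast_dvd, hdvd, hdvd] at hxy
    obtain ⟨h1, h2⟩ := hxy
    simp only [Zsqrtd.re_sub, Zsqrtd.im_sub] at h1 h2
    have key : ∀ u v : Fin q, (q : ℤ) ∣ ((u : ℕ) : ℤ) - ((v : ℕ) : ℤ) → u = v := by
      intro u v huv
      have := Int.eq_zero_of_abs_lt_dvd huv (by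
        have := u.2; have := v.2
        rw [abs_lt]; omega)
      apply Fin.ext; omega
    rw [key _ _ h1, key _ _ h2]
  rw [← Fintype.sum_bijective _ hbij
    (fun r : Fin q × Fin q => Complex.exp (2 * Real.pi * Complex.I * (2 * (r.1 : ℕ) / a)) ^ (r.2 : ℕ)) _ ?_]
  · rw [Fintype.sum_prod_type]
    have hz : ∀ u : Fin q, ∑ v : Fin q, Complex.exp (2 * Real.pi * Complex.I * (2 * (u : ℕ) / a)) ^ (v : ℕ) =
        if u = ⟨0, hq0⟩ then (q : ℂ) else 0 := by
      intro u
      have hac : (a : ℂ) ≠ 0 := by exact_mod_cast ha0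
      rw [← Finset.sum_range (fun v => Complex.exp (2 * Real.pi * Complex.I * (2 * (u : ℕ) / a)) ^ v)]
      split_ifs with hu
      · rw [hu]; simp
      · have hne : Complex.exp (2 * Real.pi * Complex.I * (2 * (u : ℕ) / a)) ≠ 1 := by
          intro h1
          rw [Complex.exp_eq_one_iff] at h1
          obtain ⟨n, hn⟩ := h1
          rw [mul_comm (n : ℂ)] at hn
          have h2 := mul_left_cancel₀ Complex.two_pi_I_ne_zero hn
          rw [div_eq_iff hac] at h2
          have h3 : 2 * ((u : ℕ) : ℤ) = n * a := by exact_mod_cast h2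
          have h4 : a ∣ 2 * ((u : ℕ) : ℤ) := ⟨n, by rw [h3]; ring⟩
          have h5 : a ∣ ((u : ℕ) : ℤ) := by
            apply IsCoprime.dvd_of_dvd_mul_left _ h4
            obtain ⟨m, hm⟩ := hodd
            exact ⟨1, -m, by rw [hm]; ring⟩
          rw [hdvd] at h5
          have h6 : q ∣ (u : ℕ) := by exact_mod_cast h5
          have h7 := Nat.eq_zero_of_dvd_of_lt h6 u.2
          exact hu (Fin.ext h7)
        rw [geom_sum_eq hne]
        have : Complex.exp (2 * Real.pi * Complex.I * (2 * (u : ℕ) / a)) ^ q = 1 := by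
          rw [← Complex.exp_nat_mul, Complex.exp_eq_one_iff]
          rcases Int.natAbs_eq a with e | e
          · refine ⟨2 * (u : ℕ), ?_⟩
            have : (q : ℂ) = a := by rw [← hq] at e; rw [e]; simp
            rw [this]; push_cast; field_simp
          · refine ⟨-(2 * (u : ℕ)), ?_⟩
            have : (q : ℂ) = -a := by rw [← hq] at e; rw [e]; simp
            rw [this]; push_cast; field_simp
        rw [this]; simp
    rw [Finset.sum_congr rfl fun u _ => hz u]
    simp
  · intro r
    rw [← map_pow, psiQ_mk, Ech_formula _ _ hϖ, ← Complex.exp_nat_mul]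
    have him : ((⟨(r.1 : ℕ), (r.2 : ℕ)⟩ : GaussianInt) ^ 2 * star ϖ).im = 2 * (r.1 : ℕ) * (r.2 : ℕ) * a := by
      rw [hϖa, sq]
      simp
      ring_nf
      simp
    have hac : (a : ℂ) ≠ 0 := by exact_mod_cast ha0
    have hN : ϖ.norm = a * a := by rw [hϖa, Zsqrtd.norm_intCast]
    rw [him, hN]
    congr 1
    push_cast
    field_simp

lemma sign_main {ϖ : GaussianInt} [hp : Fact (Prime ϖ)] (h : IsPrimary ϖ) :
    ∑ x : QR ϖ, (quadraticChar (QR ϖ) x : ℂ) * psiQ ϖ x =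
      quadraticChar (QR ϖ) (mkQ ϖ ig) * (Real.sqrt (Nm ϖ) : ℝ) := by
  rcases prime_cases hp.out h with h1 | h1
  · exact sign_inert h h1
  · exact sign_split h h1

lemma chi_prime {χ : GaussianInt → GaussianInt → ℤ} (hχ : IsQuadSym χ)
    {ϖ : GaussianInt} [hp : Fact (Prime ϖ)] (h : IsPrimary ϖ) (a : GaussianInt) :
    χ a ϖ = quadraticChar (QR ϖ) (mkQ ϖ a) := by
  by_cases hd : ϖ ∣ a
  · rw [hχ.zero_of_dvd ϖ a hp.out hd, mkQ_eq_zero.mpr hd, quadraticChar_zero]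
  have ha0 : mkQ ϖ a ≠ 0 := fun h0 => hd (mkQ_eq_zero.mp h0)
  obtain ⟨h1, h2⟩ := hχ.val_prime ϖ a hp.out (not_omega_dvd h) hd
  rw [← mkQ_eq_iff, map_pow, map_intCast] at h2
  have h3 := quadraticChar_eq_pow_of_char_ne_two' (ringChar_QR h) (mkQ ϖ a)
  have hm := card_QR_mod h
  have hN : ((Zsqrtd.norm ϖ).toNat - 1) / 2 = Fintype.card (QR ϖ) / 2 := by
    have hc : Fintype.card (QR ϖ) = (Zsqrtd.norm ϖ).toNat := by
      rw [← Nat.card_eq_fintype_card, card_QR]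
      have := GaussianInt.norm_nonneg ϖ
      omega
    omega
  rw [hN, ← h3] at h2
  have hne := Ring.neg_one_ne_one_of_char_ne_two (ringChar_QR h)
  rcases quadraticChar_dichotomy ha0 with e | e <;> rcases h1 with e' | e' <;>
    rw [e, e'] at h2 ⊢ <;> push_cast at h2
  · exact absurd h2.symm hne
  · exact absurd h2 hne

lemma primary_pow {ϖ : GaussianInt} (h : IsPrimary ϖ) (l : ℕ) : IsPrimary (ϖ ^ l) := by
  unfold IsPrimary at *
  refine h.trans ?_
  simpa using sub_dvd_pow_sub_pow ϖ 1 l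

lemma chi_pow {χ : GaussianInt → GaussianInt → ℤ} (hχ : IsQuadSym χ)
    {ϖ : GaussianInt} [hp : Fact (Prime ϖ)] (h : IsPrimary ϖ) (a : GaussianInt) (l : ℕ) :
    χ a (ϖ ^ l) = quadraticChar (QR ϖ) (mkQ ϖ a) ^ l := by
  induction l with
  | zero => simp [hχ.unit_den a 1 isUnit_one]
  | succ l ih =>
    rw [pow_succ, hχ.mul_den _ _ _ (not_omega_dvd (primary_pow h l)) (not_omega_dvd h), ih,
      chi_prime hχ h, pow_succ]

/-- reduction from modulus `ϖ^(m+1)` to modulus `ϖ` -/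
def redQ (ϖ : GaussianInt) (m : ℕ) : QR (ϖ ^ (m + 1)) →+* QR ϖ :=
  Ideal.Quotient.factor (by
    rw [Ideal.span_singleton_le_span_singleton]
    exact dvd_pow_self ϖ (Nat.succ_ne_zero m))

lemma redQ_mk (ϖ : GaussianInt) (m : ℕ) (x : GaussianInt) :
    redQ ϖ m (mkQ (ϖ ^ (m + 1)) x) = mkQ ϖ x := Ideal.Quotient.factor_mk _ _

lemma redQ_surj (ϖ : GaussianInt) (m : ℕ) : Function.Surjective (redQ ϖ m) := by
  intro y
  exact ⟨mkQ _ (Quotient.out y), by rw [redQ_mk, mkQ_out]⟩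

lemma card_QR_pow (ϖ : GaussianInt) [hp : Fact (Prime ϖ)] (l : ℕ) :
    Fintype.card (QR (ϖ ^ l)) = Fintype.card (QR ϖ) ^ l := by
  rw [← Nat.card_eq_fintype_card, ← Nat.card_eq_fintype_card, card_QR, card_QR]
  have : (ϖ ^ l).norm = ϖ.norm ^ l := map_pow Zsqrtd.normMonoidHom ϖ l
  rw [this, Int.natAbs_pow]

lemma fiber_sum (ϖ : GaussianInt) [hp : Fact (Prime ϖ)] (m : ℕ) (f : QR ϖ → ℂ) :
    ∑ q : QR (ϖ ^ (m + 1)), f (redQ ϖ m q) =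
      (Fintype.card (QR ϖ) : ℂ) ^ m * ∑ x : QR ϖ, f x := by
  obtain ⟨M, hM⟩ : ∃ M : ℕ, ∀ x : QR ϖ,
      (Finset.univ.filter fun q : QR (ϖ ^ (m + 1)) => redQ ϖ m q = x).card = M := by
    refine ⟨_, fun x => AddMonoidHom.card_fiber_eq_of_mem_range (redQ ϖ m) (y := 0)
      (redQ_surj ϖ m x) (redQ_surj ϖ m 0)⟩
  have key : ∀ f : QR ϖ → ℂ, ∑ q : QR (ϖ ^ (m + 1)), f (redQ ϖ m q) = M * ∑ x : QR ϖ, f x := by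
    intro f
    rw [← Finset.sum_fiberwise Finset.univ (redQ ϖ m), Finset.mul_sum]
    refine Finset.sum_congr rfl fun x _ => ?_
    rw [Finset.sum_congr rfl (g := fun _ => f x), Finset.sum_const, hM, nsmul_eq_mul]
    intro q hq
    rw [(Finset.mem_filter.mp hq).2]
  rw [key]
  have h1 := key (fun _ => 1)
  simp only [Finset.sum_const, Finset.card_univ, nsmul_eq_mul, mul_one] at h1
  rw [card_QR_pow] at h1
  have hN : (Fintype.card (QR ϖ) : ℂ) ≠ 0 := by exact_mod_cast Fintype.card_ne_zero
  rw [Nat.cast_pow, pow_succ] at h1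
  rw [← mul_right_cancel₀ hN h1]

lemma g_pow {χ : GaussianInt → GaussianInt → ℤ} (hχ : IsQuadSym χ)
    {g : GaussianInt → GaussianInt → ℂ} (hg : IsGaussSum χ g)
    {ϖ : GaussianInt} [hp : Fact (Prime ϖ)] (h : IsPrimary ϖ) (k : GaussianInt) (m : ℕ) :
    g k (ϖ ^ (m + 1)) = ∑ q : QR (ϖ ^ (m + 1)),
      (quadraticChar (QR ϖ) (redQ ϖ m q) : ℂ) ^ (m + 1) *
        psiQ (ϖ ^ (m + 1)) (mkQ (ϖ ^ (m + 1)) k * q) := by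
  rw [g_eq hg]
  refine Finset.sum_congr rfl fun q _ => ?_
  rw [chi_pow hχ h, ← redQ_mk ϖ m, mkQ_out]
  push_cast
  rfl

lemma quad_odd {F : Type*} [Field F] [Fintype F] [DecidableEq F] (x : F) {l : ℕ} (hl : Odd l) :
    (quadraticChar F x : ℂ) ^ l = quadraticChar F x := by
  by_cases hx : x = 0
  · subst hx
    obtain ⟨j, rfl⟩ := hl
    simp
  · rcases quadraticChar_dichotomy hx with e | e <;> rw [e]
    · simp
    · push_cast
      exact hl.neg_one_pow

lemma quad_even {F : Type*} [Field F] [Fintype F] [DecidableEq F] (x : F) {l : ℕ} (hl : Even l)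
    (hl0 : l ≠ 0) :
    (quadraticChar F x : ℂ) ^ l = if x = 0 then 0 else 1 := by
  split_ifs with hx
  · subst hx
    simp [hl0]
  · rcases quadraticChar_dichotomy hx with e | e <;> rw [e]
    · simp
    · push_cast
      exact hl.neg_one_pow

lemma redQ_isUnit (ϖ : GaussianInt) [hp : Fact (Prime ϖ)] (m : ℕ) (q : QR (ϖ ^ (m + 1))) :
    redQ ϖ m q ≠ 0 ↔ IsUnit q := by
  constructor
  · intro hq
    obtain ⟨x, rfl⟩ := Ideal.Quotient.mk_surjective q
    have hq' : ¬ ϖ ∣ x := by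
      intro hd
      apply hq
      change redQ ϖ m (mkQ _ x) = 0
      rw [redQ_mk, mkQ_eq_zero]
      exact hd
    have hc : IsCoprime (ϖ ^ (m + 1)) x :=
      ((Prime.coprime_iff_not_dvd hp.out).mpr hq').pow_left
    obtain ⟨u, v, huv⟩ := hc
    refine IsUnit.of_mul_eq_one (mkQ _ v) ?_
    have : mkQ (ϖ ^ (m + 1)) x * mkQ (ϖ ^ (m + 1)) v = 1 := by
      rw [← map_mul, ← map_one (mkQ (ϖ ^ (m + 1))), mkQ_eq_iff]
      exact ⟨-u, by linear_combination huv⟩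
    exact this
  · intro hq
    exact (hq.map (redQ ϖ m)).ne_zero

lemma g_trivial {χ : GaussianInt → GaussianInt → ℤ} (hχ : IsQuadSym χ)
    {g : GaussianInt → GaussianInt → ℂ} (hg : IsGaussSum χ g)
    {ϖ : GaussianInt} [hp : Fact (Prime ϖ)] (h : IsPrimary ϖ) (k : GaussianInt) (m : ℕ)
    (hk : ϖ ^ (m + 1) ∣ k) :
    (Odd (m + 1) → g k (ϖ ^ (m + 1)) = 0) ∧
      (Even (m + 1) → g k (ϖ ^ (m + 1)) = (phiG (ϖ ^ (m + 1)) : ℂ)) := by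
  have e : g k (ϖ ^ (m + 1)) = ∑ q : QR (ϖ ^ (m + 1)),
      (quadraticChar (QR ϖ) (redQ ϖ m q) : ℂ) ^ (m + 1) := by
    rw [g_pow hχ hg h]
    refine Finset.sum_congr rfl fun q _ => ?_
    rw [mkQ_eq_zero.mpr hk, zero_mul, AddChar.map_zero_eq_one, mul_one]
  rw [e]
  constructor
  · intro ho
    rw [fiber_sum ϖ m (fun x => (quadraticChar (QR ϖ) x : ℂ) ^ (m + 1))]
    simp only [quad_odd _ ho]
    rw [← Int.cast_sum, quadraticChar_sum_zero (ringChar_QR h)]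
    simp
  · intro he
    simp only [quad_even _ he (Nat.succ_ne_zero m)]
    have : ∀ q : QR (ϖ ^ (m + 1)), (if redQ ϖ m q = 0 then (0 : ℂ) else 1) =
        if IsUnit q then 1 else 0 := by
      intro q
      have := redQ_isUnit ϖ m q
      by_cases h1 : IsUnit q
      · simp [h1, this.mpr h1]
      · have h2 : redQ ϖ m q = 0 := by
          by_contra h3
          exact h1 (this.mp h3)
        simp [h1, h2]
    rw [Finset.sum_congr rfl fun q _ => this q, Finset.sum_boole]
    congr 1
    unfold phiG
    rw [Nat.card_congr (α := (QR (ϖ ^ (m + 1)))ˣ) (β := {q : QR (ϖ ^ (m + 1)) // IsUnit q})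
        { toFun := fun u : (QR (ϖ ^ (m + 1)))ˣ => ⟨(u : QR (ϖ ^ (m + 1))), Units.isUnit u⟩
          invFun := fun q => q.2.unit
          left_inv := fun u => Units.ext rfl
          right_inv := fun q => rfl },
      Nat.card_eq_fintype_card, Fintype.card_subtype]

lemma psi_reduce {ϖ : GaussianInt} [hp : Fact (Prime ϖ)] (m : ℕ) (k' : GaussianInt)
    (q : QR (ϖ ^ (m + 1))) :
    psiQ (ϖ ^ (m + 1)) (mkQ (ϖ ^ (m + 1)) (ϖ ^ m * k') * q) =
      psiQ ϖ (mkQ ϖ k' * redQ ϖ m q) := by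
  obtain ⟨x, rfl⟩ : ∃ x, q = mkQ _ x := ⟨_, (mkQ_out q).symm⟩
  rw [redQ_mk, ← map_mul, ← map_mul, psiQ_mk, psiQ_mk, pow_succ, mul_assoc,
    Ech_mul_cancel (pow_ne_zero _ hp.out.ne_zero)]

lemma g_edge {χ : GaussianInt → GaussianInt → ℤ} (hχ : IsQuadSym χ)
    {g : GaussianInt → GaussianInt → ℂ} (hg : IsGaussSum χ g)
    {ϖ : GaussianInt} [hp : Fact (Prime ϖ)] (h : IsPrimary ϖ) (k' : GaussianInt) (m : ℕ)
    (hk : ¬ ϖ ∣ k') :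
    (Even (m + 1) → g (ϖ ^ m * k') (ϖ ^ (m + 1)) = -((Nm ϖ ^ m : ℝ) : ℂ)) ∧
      (Odd (m + 1) → g (ϖ ^ m * k') (ϖ ^ (m + 1)) =
        (χ (ig * k') ϖ : ℂ) * ((Nm ϖ ^ (((m + 1 : ℕ) : ℝ) - 1 / 2) : ℝ) : ℂ)) := by
  have hk0 : mkQ ϖ k' ≠ 0 := fun h0 => hk (mkQ_eq_zero.mp h0)
  have hNc : (Fintype.card (QR ϖ) : ℂ) = ((Nm ϖ : ℝ) : ℂ) := by
    rw [← card_QR_cast]; simp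
  have hNpos : 0 < Nm ϖ := by
    rw [← card_QR_cast]; exact_mod_cast Fintype.card_pos
  have e : g (ϖ ^ m * k') (ϖ ^ (m + 1)) = (Fintype.card (QR ϖ) : ℂ) ^ m *
      ∑ x : QR ϖ, (quadraticChar (QR ϖ) x : ℂ) ^ (m + 1) * psiQ ϖ (mkQ ϖ k' * x) := by
    rw [← fiber_sum ϖ m (fun x => (quadraticChar (QR ϖ) x : ℂ) ^ (m + 1) * psiQ ϖ (mkQ ϖ k' * x)),
      g_pow hχ hg h]
    refine Finset.sum_congr rfl fun q _ => ?_
    rw [psi_reduce]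
  rw [e, hNc]
  constructor
  · intro he
    simp only [quad_even _ he (Nat.succ_ne_zero m)]
    have hψ' : AddChar.mulShift (psiQ ϖ) (mkQ ϖ k') ≠ 1 :=
      AddChar.IsPrimitive.of_ne_one (psiQ_ne_one ϖ) hk0
    have hs := AddChar.sum_eq_zero_of_ne_one hψ'
    simp only [AddChar.mulShift_apply] at hs
    have : ∀ x : QR ϖ, (if x = 0 then (0 : ℂ) else 1) * psiQ ϖ (mkQ ϖ k' * x) =
        psiQ ϖ (mkQ ϖ k' * x) - if x = 0 then 1 else 0 := by
      intro x
      split_ifs with hx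
      · rw [hx, mul_zero, AddChar.map_zero_eq_one]; ring
      · ring
    rw [Finset.sum_congr rfl fun x _ => this x, Finset.sum_sub_distrib, hs]
    simp
  · intro ho
    simp only [quad_odd _ ho]
    rw [gauss_shift _ hk0, sign_main h, chi_prime hχ h, map_mul, map_mul]
    have : Nm ϖ ^ (((m + 1 : ℕ) : ℝ) - 1 / 2) = Nm ϖ ^ m * Real.sqrt (Nm ϖ) := by
      rw [Real.sqrt_eq_rpow, ← Real.rpow_natCast, ← Real.rpow_add hNpos]
      congr 1
      push_cast
      ring
    rw [this]
    push_cast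
    ring

lemma g_far {χ : GaussianInt → GaussianInt → ℤ} (hχ : IsQuadSym χ)
    {g : GaussianInt → GaussianInt → ℂ} (hg : IsGaussSum χ g)
    {ϖ : GaussianInt} [hp : Fact (Prime ϖ)] (h : IsPrimary ϖ) (k' : GaussianInt) (n j : ℕ)
    (hk : ¬ ϖ ∣ k') :
    g (ϖ ^ n * k') (ϖ ^ (n + j + 1 + 1)) = 0 := by
  have hk0 : mkQ ϖ k' ≠ 0 := fun h0 => hk (mkQ_eq_zero.mp h0)
  have hψ' : AddChar.mulShift (psiQ ϖ) (mkQ ϖ k') ≠ 1 :=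
    AddChar.IsPrimitive.of_ne_one (psiQ_ne_one ϖ) hk0
  obtain ⟨y0, hy⟩ := AddChar.ne_one_iff.mp hψ'
  obtain ⟨y, rfl⟩ : ∃ y, y0 = mkQ ϖ y := ⟨_, (mkQ_out y0).symm⟩
  rw [AddChar.mulShift_apply, ← map_mul, psiQ_mk] at hy
  set P := ϖ ^ (n + j + 1 + 1) with hP
  set s : QR P := mkQ P (ϖ ^ (j + 1) * y) with hs
  have hred : redQ ϖ (n + j + 1) s = 0 := by
    rw [hs, redQ_mk, mkQ_eq_zero]
    exact (dvd_pow_self ϖ (Nat.succ_ne_zero j)).mul_right _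
  have hE : psiQ P (mkQ P (ϖ ^ n * k') * s) = Ech ϖ (k' * y) := by
    rw [hs, ← map_mul, psiQ_mk]
    have e1 : P = ϖ ^ (n + j + 1) * ϖ := by rw [hP, pow_succ]
    have e2 : ϖ ^ n * k' * (ϖ ^ (j + 1) * y) = ϖ ^ (n + j + 1) * (k' * y) := by ring
    rw [e2, e1, Ech_mul_cancel (pow_ne_zero _ hp.out.ne_zero)]
  have hS : g (ϖ ^ n * k') P = ∑ q : QR P,
      (quadraticChar (QR ϖ) (redQ ϖ (n + j + 1) q) : ℂ) ^ (n + j + 1 + 1) *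
        psiQ P (mkQ P (ϖ ^ n * k') * q) := g_pow hχ hg h (ϖ ^ n * k') (n + j + 1)
  have hS2 : g (ϖ ^ n * k') P = Ech ϖ (k' * y) * g (ϖ ^ n * k') P := by
    conv_lhs => rw [hS, ← Equiv.sum_comp (Equiv.addRight s)]
    rw [hS, Finset.mul_sum]
    refine Finset.sum_congr rfl fun q _ => ?_
    rw [Equiv.coe_addRight, map_add, hred, add_zero, mul_add, AddChar.map_add_eq_mul, hE]
    ring
  have : (1 - Ech ϖ (k' * y)) * g (ϖ ^ n * k') P = 0 := by linear_combination hS2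
  rcases mul_eq_zero.mp this with h0 | h0
  · exact absurd (sub_eq_zero.mp h0).symm hy
  · exact h0

/-- explicit evaluation of the quadratic Gauss sum `g(k, ϖ^l)` at powers of a
primary prime `ϖ` (Lemma 2.1 (ii) of the paper).  Here `h` is the exact power of `ϖ`
dividing `k` (the second clause treats `k = 0`, i.e. `h = ∞`). -/
theorem gauss_sum_prime_power
    (χ : GaussianInt → GaussianInt → ℤ) (hχ : IsQuadSym χ)
    (g : GaussianInt → GaussianInt → ℂ) (hg : IsGaussSum χ g)
    (ϖ : GaussianInt) (hp : Prime ϖ) (hprim : IsPrimary ϖ) :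
    (∀ k : GaussianInt, k ≠ 0 → ∀ h : ℕ, ϖ ^ h ∣ k → ¬ ϖ ^ (h + 1) ∣ k →
      ∀ l : ℕ, 1 ≤ l →
        (l ≤ h → Odd l → g k (ϖ ^ l) = 0) ∧
        (l ≤ h → Even l → g k (ϖ ^ l) = (phiG (ϖ ^ l) : ℂ)) ∧
        (l = h + 1 → Even l → g k (ϖ ^ l) = -((Nm ϖ ^ (l - 1) : ℝ) : ℂ)) ∧
        (l = h + 1 → Odd l → g k (ϖ ^ l) =
          (χ (ig * (k / ϖ ^ h)) ϖ : ℂ) * ((Nm ϖ ^ ((l : ℝ) - 1 / 2) : ℝ) : ℂ)) ∧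
        (h + 2 ≤ l → g k (ϖ ^ l) = 0)) ∧
    (∀ l : ℕ, 1 ≤ l →
      (Odd l → g 0 (ϖ ^ l) = 0) ∧ (Even l → g 0 (ϖ ^ l) = (phiG (ϖ ^ l) : ℂ))) := by
  have : Fact (Prime ϖ) := ⟨hp⟩
  constructor
  · intro k _ h hd hnd l hl
    obtain ⟨m, rfl⟩ : ∃ m, l = m + 1 := ⟨l - 1, by omega⟩
    have hϖh : ϖ ^ h ≠ 0 := pow_ne_zero _ hp.ne_zero
    obtain ⟨k', rfl⟩ := hd
    have hk' : ¬ ϖ ∣ k' := by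
      rintro ⟨y, rfl⟩
      exact hnd ⟨y, by ring⟩
    refine ⟨fun hlh ho => ?_, fun hlh he => ?_, fun hlh he => ?_, fun hlh ho => ?_, fun hlh => ?_⟩
    · exact (g_trivial hχ hg hprim _ m ((pow_dvd_pow ϖ hlh).mul_right k')).1 ho
    · exact (g_trivial hχ hg hprim _ m ((pow_dvd_pow ϖ hlh).mul_right k')).2 he
    · obtain rfl : m = h := by omega
      exact (g_edge hχ hg hprim k' m hk').1 he
    · obtain rfl : m = h := by omega
      rw [mul_div_cancel_left₀ _ hϖh]
      exact (g_edge hχ hg hprim k' m hk').2 ho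
    · obtain ⟨j, rfl⟩ : ∃ j, m = h + j + 1 := ⟨m - h - 1, by omega⟩
      exact g_far hχ hg hprim k' h j hk'
  · intro l hl
    obtain ⟨m, rfl⟩ : ∃ m, l = m + 1 := ⟨l - 1, by omega⟩
    exact g_trivial hχ hg hprim 0 m (dvd_zero _)
end
end
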